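/- arXiv:1607.00062 — 3 statements merged into one kernel-verified Lean document; each statement's English description precedes it below -/
import Mathlib

section
/- Let A be a Noetherian domain, let R be a Noetherian A-algebra, and let I ⊆ R be an ideal such that R/I is a finitely generated A-module. Let M be a finitely generated R-module. Then there exists a nonzero g ∈ A such that Hom_A^cts(M, A) ⊗_A A_g is a free A_g-module, and for every commutative A-algebra L whose structure map factors through A_g, the natural map Hom_A^cts(M, A) ⊗_A L → Hom_L^cts(M ⊗_A L, L) is an isomorphism of (R ⊗_A L)-modules. -/
/-- The relative Matlis dual / continuous dual: the `A`-submodule of `Hom_A(M, A)` consisting of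
the `A`-linear maps `φ : M → A` such that `φ(IᵗM) = 0` for some `t`. -/
def ContinuousDual (A : Type*) [CommRing A] (R : Type*) [CommRing R] [Algebra A R]
    (I : Ideal R) (M : Type*) [AddCommGroup M] [Module A M] [Module R M] :
    Submodule A (M →ₗ[A] A) where
  carrier := {φ | ∃ t : ℕ, ∀ r ∈ I ^ t, ∀ m : M, φ (r • m) = 0}
  add_mem' := by
    rintro φ ψ ⟨t, ht⟩ ⟨s, hs⟩
    exact ⟨t + s, fun r hr m => by
      have h1 := ht r (Ideal.pow_le_pow_right (Nat.le_add_right t s) hr) m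
      have h2 := hs r (Ideal.pow_le_pow_right (Nat.le_add_left s t) hr) m
      simp [h1, h2]⟩
  zero_mem' := ⟨0, fun r _ m => rfl⟩
  smul_mem' := by
    rintro a φ ⟨t, ht⟩
    exact ⟨t, fun r hr m => by simp [ht r hr m]⟩

variable {A : Type*} [CommRing A] {R : Type*} [CommRing R] [Algebra A R]
  {I : Ideal R} {M : Type*} [AddCommGroup M] [Module A M] [Module R M] [IsScalarTower A R M]

/-- `Hom_A^cts(M, A)` is an `R`-module via premultiplication: `(r • φ) m = φ (r • m)`. -/
noncomputable instance ContinuousDual.instModuleR : Module R (ContinuousDual A R I M) where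
  smul r φ :=
    ⟨{  toFun := fun m => (φ : M →ₗ[A] A) (r • m)
        map_add' := fun m m' => by simp [smul_add]
        map_smul' := fun a m => by
          simp only [RingHom.id_apply]
          rw [smul_comm r a m, map_smul] },
      by
        obtain ⟨t, ht⟩ := φ.2
        exact ⟨t, fun s hs m => by
          have : s • r • m = r • s • m := smul_comm s r m
          simpa [this] using ht s hs (r • m)⟩⟩
  one_smul φ := by ext m; exact congrArg _ (one_smul R m)
  mul_smul r s φ := by
    ext m
    show (φ : M →ₗ[A] A) ((r * s) • m) = (φ : M →ₗ[A] A) (s • r • m)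
    rw [smul_smul, mul_comm r s]
  smul_zero r := by ext m; rfl
  smul_add r φ ψ := by ext m; rfl
  add_smul r s φ := by
    ext m
    show (φ : M →ₗ[A] A) ((r + s) • m) = (φ : M →ₗ[A] A) (r • m) + (φ : M →ₗ[A] A) (s • m)
    rw [add_smul, map_add]
  zero_smul φ := by
    ext m
    show (φ : M →ₗ[A] A) ((0 : R) • m) = 0
    rw [zero_smul, map_zero]

lemma ContinuousDual.smul_apply (r : R) (φ : ContinuousDual A R I M) (m : M) :
    ((r • φ : ContinuousDual A R I M) : M →ₗ[A] A) m = (φ : M →ₗ[A] A) (r • m) := rfl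

noncomputable instance : SMulCommClass R R (ContinuousDual A R I M) where
  smul_comm r s φ := by
    ext m
    show (φ : M →ₗ[A] A) (s • r • m) = (φ : M →ₗ[A] A) (r • s • m)
    rw [smul_comm s r m]

open scoped TensorProduct

set_option synthInstance.maxHeartbeats 1000000
set_option maxHeartbeats 1000000

attribute [local instance] Algebra.TensorProduct.rightAlgebra

/-- The two scalar actions on `R ⊗[A] L` (of `R` on the left and of `L` on the right)
commute. -/
noncomputable instance tensorSMulCommClass (A R L : Type) [CommRing A] [CommRing R] [CommRing L]
    [Algebra A R] [Algebra A L] : SMulCommClass R L (R ⊗[A] L) :=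
  ⟨fun r l x => by
    rw [Algebra.smul_def, Algebra.smul_def, Algebra.smul_def, Algebra.smul_def, mul_left_comm]⟩

/-!
Generators of `I` and vectors spanning `M` modulo `IM` give monomial vectors adapted to the `I`-adic
filtration of `M`. For each of them, the leading coefficients that can be eliminated by later
vectors form an ideal of `A`, and this ideal grows with the exponent of the monomial. By Dickson's
lemma only finitely many exponents are minimal among those with a nonzero ideal, so a single `g ≠ 0`
lies in all the nonzero ones. After inverting `g`, the monomial vectors whose ideal is zero form a
basis of every `M / IᵗM`. The coordinate of `M / Iᵗ⁺¹M` at a basis vector of degree `t` is a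
functional on `M` that kills all basis vectors of higher degree, so these coordinates form a dual
basis. A functional that kills some `IᵗM` is a finite combination of them, over `A_g` as well as
over any `A_g`-algebra, so the continuous dual is free and commutes with base change.
-/

lemma smul_mem_of_mem_span (r : R) {s : Set M} {N : Submodule A M} (h : ∀ y ∈ s, r • y ∈ N) {y : M}
    (hy : y ∈ Submodule.span A s) : r • y ∈ N :=
  (Submodule.span_le.2 h : Submodule.span A s ≤ N.comap (Algebra.lsmul A A M r)) hy

section Flag

variable {Q ι : Type*} [AddCommGroup Q] [Module A Q] {g : A} {v : ι → Q}

lemma exists_pow_smul_mem_of_mem_span {N : Submodule A Q} {s : Set Q} (hs : s.Finite)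
    (h : ∀ x ∈ s, ∃ e : ℕ, g ^ e • x ∈ N) :
    ∃ e : ℕ, ∀ x ∈ Submodule.span A s, g ^ e • x ∈ N := by
  have eventually_mem : ∀ x ∈ s, ∀ᶠ e : ℕ in Filter.atTop, g ^ e • x ∈ N := by
    intro x hx
    obtain ⟨e₀, he₀⟩ := h x hx
    filter_upwards [Filter.eventually_ge_atTop e₀] with e he
    rw [← Nat.sub_add_cancel he, pow_add, mul_smul]
    exact N.smul_mem _ he₀
  obtain ⟨e, he⟩ := (hs.eventually_all.2 eventually_mem).exists
  exact ⟨e, fun x hx => smul_mem_of_mem_span _ he hx⟩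

lemma linearIndependent_of_smul_mem_span_Ioi [LinearOrder ι]
    (h : ∀ i, ∀ a : A, a • v i ∈ Submodule.span A (v '' Set.Ioi i) → a = 0) :
    LinearIndependent A v := by
  rw [linearIndependent_iff]
  intro l hl
  by_contra hne
  have hsupp : l.support.Nonempty := Finsupp.support_nonempty_iff.2 hne
  set i := l.support.min' hsupp
  have hi : i ∈ l.support := l.support.min'_mem hsupp
  refine Finsupp.mem_support_iff.1 hi (h i (l i) ?_)
  rw [Finsupp.linearCombination_apply, Finsupp.sum, ← Finset.add_sum_erase _ _ hi] at hl
  rw [eq_neg_of_add_eq_zero_left hl]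
  refine neg_mem (Submodule.sum_mem _ fun j hj => Submodule.smul_mem _ _ ?_)
  exact Submodule.subset_span ⟨j, l.support.min'_lt_of_mem_erase_min' hsupp hj, rfl⟩

lemma exists_pow_smul_mem_span_image [LinearOrder ι] [Finite ι] {S : Set ι}
    (h : ∀ i ∉ S, g • v i ∈ Submodule.span A (v '' Set.Ioi i)) :
    ∃ e : ℕ, ∀ x ∈ Submodule.span A (Set.range v), g ^ e • x ∈ Submodule.span A (v '' S) := by
  refine exists_pow_smul_mem_of_mem_span (Set.finite_range v) (Set.forall_mem_range.2 fun i => ?_)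
  induction i using WellFoundedGT.induction with
  | ind i ih =>
    by_cases hi : i ∈ S
    · exact ⟨0, Submodule.smul_mem _ _ (Submodule.subset_span ⟨i, hi, rfl⟩)⟩
    · obtain ⟨e, he⟩ := exists_pow_smul_mem_of_mem_span ((Set.toFinite (Set.Ioi i)).image v)
        (Set.forall_mem_image.2 ih)
      exact ⟨e + 1, by rw [pow_succ, mul_smul]; exact he _ (h i hi)⟩

lemma exists_linearMap_finsupp_of_linearIndependent (hv : LinearIndependent A v) {a : A}
    (h : ∀ x, a • x ∈ Submodule.span A (Set.range v)) :
    ∃ ψ : Q →ₗ[A] ι →₀ A, ∀ i, ψ (v i) = Finsupp.single i a := by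
  refine ⟨hv.repr ∘ₗ (LinearMap.lsmul A Q a).codRestrict _ h, fun i => ?_⟩
  exact (hv.repr.map_smul a ⟨v i, Submodule.subset_span (Set.mem_range_self i)⟩).trans
    (by rw [hv.repr_eq_single i _ rfl, Finsupp.smul_single_one])

end Flag

section Dickson

variable [IsDomain A] {ι κ : Type*}

lemma exists_ne_zero_forall_eq_bot_or_mem [Finite ι] (J : ι → Ideal A) :
    ∃ g : A, g ≠ 0 ∧ ∀ i, J i = ⊥ ∨ g ∈ J i := by
  classical
  have := Fintype.ofFinite ι
  have exists_mem : ∀ i, ∃ a : A, a ≠ 0 ∧ (J i = ⊥ ∨ a ∈ J i) := fun i => by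
    by_cases hi : J i = ⊥
    · exact ⟨1, one_ne_zero, .inl hi⟩
    · obtain ⟨a, ha, ha0⟩ := Submodule.exists_mem_ne_zero_of_ne_bot hi
      exact ⟨a, ha0, .inr ha⟩
  choose a ha0 ha using exists_mem
  exact ⟨∏ i, a i, Finset.prod_ne_zero_iff.2 fun i _ => ha0 i, fun i =>
    (ha i).imp_right fun hi => (J i).mem_of_dvd (Finset.dvd_prod_of_mem a (Finset.mem_univ i)) hi⟩

lemma exists_ne_zero_forall_eq_bot_or_mem_of_monotone [PartialOrder ι] [WellQuasiOrderedLE ι]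
    [Finite κ] (J : κ → ι → Ideal A) (hJ : ∀ k, Monotone (J k)) :
    ∃ g : A, g ≠ 0 ∧ ∀ k i, J k i = ⊥ ∨ g ∈ J k i := by
  have finite_minimals (k : κ) : Finite {i // Minimal (J k · ≠ ⊥) i} :=
    WellQuasiOrderedLE.finite_of_isAntichain (setOfPred_minimal_antichain _)
  obtain ⟨g, hg0, hg⟩ := exists_ne_zero_forall_eq_bot_or_mem
    fun p : Σ k, {i // Minimal (J k · ≠ ⊥) i} => J p.1 p.2
  refine ⟨g, hg0, fun k i => or_iff_not_imp_left.2 fun hi => ?_⟩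
  obtain ⟨m, hmi, hm⟩ := exists_minimal_le_of_wellFoundedLT (J k · ≠ ⊥) i hi
  exact hJ k hmi ((hg ⟨k, m, hm⟩).resolve_left hm.prop)

end Dickson

open Submodule

/-- A family `b` whose members of degree `t` lie in `F t` and span it modulo `F (t + 1)`, for a
decreasing exhaustive filtration `F`. The index order, along which leading terms are eliminated,
refines the degree. -/
structure IsAdaptedFamily {ι : Type*} [Preorder ι]
    (F : ℕ → Submodule A M) (deg : ι → ℕ) (b : ι → M) : Prop where
  antitone : Antitone F
  zero_eq_top : F 0 = ⊤
  monotone_deg : Monotone deg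
  finite_deg_lt : ∀ t, {i | deg i < t}.Finite
  mem : ∀ i, b i ∈ F (deg i)
  le_span_sup_succ : ∀ t, F t ≤ span A (b '' {i | deg i = t}) ⊔ F (t + 1)

/-- A family `b` with biorthogonal functionals `φ`, up to powers of `g`: after inverting `g`, the
`b i` with `deg i < t` become a basis of `M ⧸ F t` for every `t`, and `φ` the dual basis. -/
structure IsGenericDualBasis {ι : Type*}
    (F : ℕ → Submodule A M) (g : A) (deg : ι → ℕ) (b : ι → M) (φ : ι → M →ₗ[A] A) : Prop where
  finite_deg_lt : ∀ t, {i | deg i < t}.Finite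
  exists_pow_smul_mem : ∀ t, ∃ e : ℕ, ∀ m, g ^ e • m ∈ span A (b '' {i | deg i < t}) ⊔ F t
  le_ker : ∀ {t i}, deg i < t → F t ≤ LinearMap.ker (φ i)
  apply_self : ∀ i, ∃ e : ℕ, φ i (b i) = g ^ e
  apply_of_ne : ∀ i j, i ≠ j → φ i (b j) = 0

/-- The span of the vectors after `b i` and of the part of the filtration beyond `deg i`: it
contains `a • b i` when `a` is a leading coefficient that can be eliminated at `i`. -/
def tailSubmodule {ι : Type*} [Preorder ι]
    (F : ℕ → Submodule A M) (deg : ι → ℕ) (b : ι → M) (i : ι) : Submodule A M :=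
  span A (b '' Set.Ioi i) ⊔ F (deg i + 1)

lemma span_range_mkQ_subtype {ι : Type*} (N : Submodule A M) (b : ι → M) (p : ι → Prop) :
    span A (Set.range fun i : {i // p i} => N.mkQ (b i)) = (span A (b '' {i | p i})).map N.mkQ := by
  rw [map_span, Set.image_image, Set.image_eq_range]
  rfl

namespace IsAdaptedFamily

variable {ι : Type*} [LinearOrder ι] {F : ℕ → Submodule A M} {deg : ι → ℕ} {b : ι → M}
  (h : IsAdaptedFamily F deg b)
include h

lemma le_span_sup {t u : ℕ} (htu : t ≤ u) :
    F t ≤ span A (b '' {i | t ≤ deg i ∧ deg i < u}) ⊔ F u := by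
  induction u, htu using Nat.le_induction with
  | base => exact le_sup_right
  | succ u htu ih =>
    refine ih.trans (sup_le (le_sup_of_le_left (span_mono (Set.image_mono ?_))) ?_)
    · exact fun i hi => ⟨hi.1, hi.2.trans u.lt_succ_self⟩
    · refine (h.le_span_sup_succ u).trans (sup_le_sup_right (span_mono (Set.image_mono ?_)) _)
      rintro i rfl
      exact ⟨htu, (deg i).lt_succ_self⟩

lemma span_mkQ_eq_top (t : ℕ) :
    span A (Set.range fun j : {j // deg j < t} => (F t).mkQ (b j)) = ⊤ := by
  rw [span_range_mkQ_subtype, map_mkQ_eq_top, eq_top_iff, ← h.zero_eq_top, sup_comm]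
  refine (h.le_span_sup t.zero_le).trans (sup_le_sup_right (span_mono (Set.image_mono ?_)) _)
  exact fun i hi => hi.2

lemma tailSubmodule_eq {t : ℕ} {i : ι} (hi : deg i < t) :
    tailSubmodule F deg b i = span A (b '' {j | i < j ∧ deg j < t}) ⊔ F t := by
  apply le_antisymm
  · refine sup_le (span_le.2 ?_) ((h.le_span_sup hi).trans
      (sup_le_sup_right (span_mono (Set.image_mono ?_)) _))
    · rintro _ ⟨j, hj, rfl⟩
      rcases lt_or_ge (deg j) t with hjt | hjt
      · exact mem_sup_left (subset_span ⟨j, ⟨hj, hjt⟩, rfl⟩)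
      · exact mem_sup_right (h.antitone hjt (h.mem j))
    · exact fun j hj => ⟨h.monotone_deg.reflect_lt hj.1, hj.2⟩
  · exact sup_le_sup (span_mono (Set.image_mono fun j hj => hj.1)) (h.antitone hi)

lemma mkQ_mem_span_image_Ioi_iff {t : ℕ} (i : {i // deg i < t}) (m : M) :
    (F t).mkQ m ∈ span A ((fun j : {j // deg j < t} => (F t).mkQ (b j)) '' Set.Ioi i) ↔
      m ∈ tailSubmodule F deg b i := by
  have h_image : (fun j : {j // deg j < t} => (F t).mkQ (b j)) '' Set.Ioi i =
      (F t).mkQ '' (b '' {j | i < j ∧ deg j < t}) := by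
    rw [Set.image_image]
    exact Set.ext fun x => ⟨fun ⟨j, hj, hx⟩ => ⟨j, ⟨hj, j.2⟩, hx⟩,
      fun ⟨j, hj, hx⟩ => ⟨⟨j, hj.2⟩, hj.1, hx⟩⟩
  rw [h.tailSubmodule_eq i.2, h_image, ← map_span, ← mem_comap, comap_map_mkQ, sup_comm]

variable {g : A} {S : Set ι}

lemma exists_pow_smul_mem_span_mkQ (hS : ∀ i ∉ S, g • b i ∈ tailSubmodule F deg b i) (t : ℕ) :
    ∃ e : ℕ, ∀ x, g ^ e • x ∈
      span A (Set.range fun j : {j : S // deg j < t} => (F t).mkQ (b j)) := by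
  have : Finite {i // deg i < t} := h.finite_deg_lt t
  obtain ⟨e, he⟩ := exists_pow_smul_mem_span_image (g := g)
    (v := fun j : {j // deg j < t} => (F t).mkQ (b j)) (S := {j | j.1 ∈ S})
    fun i hi => (h.mkQ_mem_span_image_Ioi_iff i _).2 (hS i hi)
  refine ⟨e, fun x => span_mono ?_ (he x (h.span_mkQ_eq_top t ▸ mem_top))⟩
  rintro _ ⟨j, hj, rfl⟩
  exact ⟨⟨⟨j, hj⟩, j.2⟩, rfl⟩

lemma linearIndependent_mkQ (hS : ∀ i ∈ S, ∀ a : A, a • b i ∈ tailSubmodule F deg b i → a = 0)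
    (t : ℕ) : LinearIndependent A fun j : {j : S // deg j < t} => (F t).mkQ (b j) := by
  refine linearIndependent_of_smul_mem_span_Ioi fun i a hia => hS i i.1.2 a ?_
  refine (h.mkQ_mem_span_image_Ioi_iff ⟨i, i.2⟩ _).1 (span_mono ?_ hia)
  rintro _ ⟨j, hj, rfl⟩
  exact ⟨⟨j, j.2⟩, hj, rfl⟩

lemma exists_dual (hS : ∀ i ∈ S, ∀ a : A, a • b i ∈ tailSubmodule F deg b i → a = 0)
    (hS' : ∀ i ∉ S, g • b i ∈ tailSubmodule F deg b i) (i : S) :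
    ∃ φ : M →ₗ[A] A, F (deg i + 1) ≤ LinearMap.ker φ ∧ (∃ e : ℕ, φ (b i) = g ^ e) ∧
      ∀ j : S, i ≠ j → φ (b j) = 0 := by
  set t := deg i + 1
  let i' : {j : S // deg j < t} := ⟨i, (deg i).lt_succ_self⟩
  obtain ⟨e, he⟩ := h.exists_pow_smul_mem_span_mkQ hS' t
  obtain ⟨ψ, hψ⟩ := exists_linearMap_finsupp_of_linearIndependent (h.linearIndependent_mkQ hS t) he
  let φ : M →ₗ[A] A := Finsupp.lapply i' ∘ₗ ψ ∘ₗ (F t).mkQ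
  have φ_apply (j : {j : S // deg j < t}) : φ (b j) = Finsupp.single j (g ^ e) i' :=
    DFunLike.congr_fun (hψ j) i'
  have le_ker : F t ≤ LinearMap.ker φ := fun m hm => by
    simp [φ, (Submodule.Quotient.mk_eq_zero _).2 hm]
  refine ⟨φ, le_ker, ⟨e, (φ_apply i').trans Finsupp.single_eq_same⟩, fun j hij => ?_⟩
  rcases lt_or_ge (deg j) t with hjt | hjt
  · exact (φ_apply ⟨j, hjt⟩).trans
      (Finsupp.single_eq_of_ne fun hji => hij (congrArg Subtype.val hji))
  · exact le_ker (h.antitone hjt (h.mem j))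

theorem exists_isGenericDualBasis
    (hg : ∀ i, (∀ a : A, a • b i ∈ tailSubmodule F deg b i → a = 0) ∨
      g • b i ∈ tailSubmodule F deg b i) :
    ∃ (S : Set ι) (φ : S → M →ₗ[A] A),
      IsGenericDualBasis F g (fun i : S => deg i) (fun i : S => b i) φ := by
  let S : Set ι := {i | ∀ a : A, a • b i ∈ tailSubmodule F deg b i → a = 0}
  have hS : ∀ i ∉ S, g • b i ∈ tailSubmodule F deg b i := fun i hi => (hg i).resolve_left hi
  choose φ le_ker apply_self apply_of_ne using h.exists_dual (S := S) (fun i hi => hi) hS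
  refine ⟨S, φ, fun t => (h.finite_deg_lt t).preimage Subtype.val_injective.injOn, fun t => ?_,
    fun hi => (h.antitone hi).trans (le_ker _), apply_self, apply_of_ne⟩
  obtain ⟨e, he⟩ := h.exists_pow_smul_mem_span_mkQ hS t
  refine ⟨e, fun m => ?_⟩
  have mkQ_mem := he ((F t).mkQ m)
  rwa [span_range_mkQ_subtype (F t) (fun j : S => b j), ← map_smul, ← mem_comap, comap_map_mkQ,
    sup_comm] at mkQ_mem

end IsAdaptedFamily

/-- The `I`-adic filtration of `M`, as a filtration by `A`-submodules. -/
def adicFiltration (A : Type*) [CommRing A] {R : Type*} [CommRing R] [Algebra A R] (I : Ideal R)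
    (M : Type*) [AddCommGroup M] [Module A M] [Module R M] [IsScalarTower A R M] (t : ℕ) :
    Submodule A M :=
  (I ^ t • ⊤ : Submodule R M).restrictScalars A

lemma mem_adicFiltration {t : ℕ} {m : M} :
    m ∈ adicFiltration A I M t ↔ m ∈ (I ^ t • ⊤ : Submodule R M) := Iff.rfl

lemma adicFiltration_antitone : Antitone (adicFiltration A I M) := fun _ _ htu _ hm =>
  Submodule.smul_mono_left (Ideal.pow_le_pow_right htu) (mem_adicFiltration.1 hm)

lemma adicFiltration_zero : adicFiltration A I M 0 = ⊤ := by
  rw [adicFiltration, pow_zero, Ideal.one_eq_top, top_smul, restrictScalars_top]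

lemma smul_mem_adicFiltration_add {s t : ℕ} {r : R} {m : M} (hr : r ∈ I ^ s)
    (hm : m ∈ adicFiltration A I M t) : r • m ∈ adicFiltration A I M (s + t) := by
  rw [mem_adicFiltration] at hm ⊢
  rw [pow_add, Submodule.mul_smul]
  exact Submodule.smul_mem_smul hr hm

section Monomials

variable {σ κ : Type*} (x : σ → R) (w : κ → M)

/-- The vectors `x ^ α • w k`, indexed by pairs `(α, k)` ordered lexicographically, where exponents
are compared degree first. -/
noncomputable def monomialFamily (p : DegLex (σ →₀ ℕ) ×ₗ κ) : M :=
  (ofDegLex (ofLex p).1).prod (x · ^ ·) • w (ofLex p).2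

/-- The total degree of the exponent `α` of an index `(α, k)`. -/
noncomputable def monomialDegree (p : DegLex (σ →₀ ℕ) ×ₗ κ) : ℕ :=
  (ofDegLex (ofLex p).1).degree

lemma span_range_pow_eq_span_finsuppProd (t : ℕ) :
    Ideal.span (Set.range x) ^ t =
      Ideal.span ((·.prod (x · ^ ·)) '' {α : σ →₀ ℕ | α.degree = t}) := by
  rw [Ideal.span, Submodule.span_pow, ← Set.image_univ, Finsupp.image_pow_eq_finsuppProd_image]
  simp only [Set.subset_univ, and_true]

lemma finsuppProd_mem_span_range_pow (α : σ →₀ ℕ) :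
    α.prod (x · ^ ·) ∈ Ideal.span (Set.range x) ^ α.degree := by
  rw [span_range_pow_eq_span_finsuppProd]
  exact Ideal.subset_span ⟨α, rfl, rfl⟩

/-- Multiplication of the index `(α, k)` by the monomial with exponent `β`. -/
noncomputable def monomialShift (β : DegLex (σ →₀ ℕ)) (p : DegLex (σ →₀ ℕ) ×ₗ κ) :
    DegLex (σ →₀ ℕ) ×ₗ κ :=
  toLex (β + (ofLex p).1, (ofLex p).2)

lemma smul_monomialFamily (β : DegLex (σ →₀ ℕ)) (p : DegLex (σ →₀ ℕ) ×ₗ κ) :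
    (ofDegLex β).prod (x · ^ ·) • monomialFamily x w p =
      monomialFamily x w (monomialShift β p) := by
  rw [monomialFamily, smul_smul, ← Finsupp.prod_add_index' (fun _ => pow_zero _)
    fun _ _ _ => pow_add _ _ _]
  rfl

lemma monomialDegree_monomialShift (β : DegLex (σ →₀ ℕ)) (p : DegLex (σ →₀ ℕ) ×ₗ κ) :
    monomialDegree (monomialShift β p) = (ofDegLex β).degree + monomialDegree p :=
  map_add Finsupp.degree (ofDegLex β) _

lemma finite_monomialDegree_lt [Finite σ] [Finite κ] (t : ℕ) :
    {p : DegLex (σ →₀ ℕ) ×ₗ κ | monomialDegree p < t}.Finite :=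
  ((Finsupp.finite_of_degree_le t).prod Set.finite_univ).subset
    fun (p : (σ →₀ ℕ) × κ) (hp : p.1.degree < t) => ⟨hp.le, trivial⟩

lemma adicFiltration_le_span_monomialFamily_sup (hx : Ideal.span (Set.range x) = I)
    (hw : span A (Set.range w) ⊔ (I • ⊤ : Submodule R M).restrictScalars A = ⊤) (t : ℕ) :
    adicFiltration A I M t ≤
      span A (monomialFamily x w '' {p | monomialDegree p = t}) ⊔ adicFiltration A I M (t + 1) := by
  intro m hm
  rw [adicFiltration, restrictScalars_mem, ← hx, span_range_pow_eq_span_finsuppProd, span_smul_eq,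
    mem_set_smul] at hm
  obtain ⟨c, hc, rfl⟩ := hm
  rw [Finsupp.sum, AddSubmonoidClass.coe_finsetSum]
  refine sum_mem fun r hr => ?_
  obtain ⟨α, rfl, rfl⟩ := hc hr
  have exists_add (m : M) :
      ∃ y ∈ span A (Set.range w), ∃ z ∈ adicFiltration A I M 1, y + z = m := by
    rw [← mem_sup, adicFiltration, pow_one, hw]
    trivial
  obtain ⟨y, hy, z, hz, hyz⟩ := exists_add (c (α.prod (x · ^ ·)))
  rw [SetLike.val_smul, ← hyz, smul_add]
  refine add_mem (mem_sup_left (smul_mem_of_mem_span _ ?_ hy)) (mem_sup_right ?_)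
  · rintro _ ⟨k, rfl⟩
    exact subset_span ⟨toLex (toDegLex α, k), rfl, rfl⟩
  · exact smul_mem_adicFiltration_add (hx ▸ finsuppProd_mem_span_range_pow x α) hz

variable [LinearOrder σ] [LinearOrder κ]

lemma monomialDegree_monotone : Monotone (monomialDegree : DegLex (σ →₀ ℕ) ×ₗ κ → ℕ) :=
  fun _ _ hpq => Finsupp.DegLex.monotone_degree (Prod.Lex.monotone_fst _ _ hpq)

lemma monomialShift_strictMono (β : DegLex (σ →₀ ℕ)) :
    StrictMono (monomialShift β : DegLex (σ →₀ ℕ) ×ₗ κ → _) := fun p q hpq => by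
  rw [Prod.Lex.lt_iff] at hpq ⊢
  exact hpq.imp (add_lt_add_right · β) (And.imp_left (congrArg (β + ·)))

theorem isAdaptedFamily_monomialFamily [Finite σ] [Finite κ] (hx : Ideal.span (Set.range x) = I)
    (hw : span A (Set.range w) ⊔ (I • ⊤ : Submodule R M).restrictScalars A = ⊤) :
    IsAdaptedFamily (adicFiltration A I M) monomialDegree (monomialFamily x w) where
  antitone := adicFiltration_antitone
  zero_eq_top := adicFiltration_zero
  monotone_deg := monomialDegree_monotone
  finite_deg_lt := finite_monomialDegree_lt
  mem _ := mem_adicFiltration.2 <|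
    Submodule.smul_mem_smul (hx ▸ finsuppProd_mem_span_range_pow x _) mem_top
  le_span_sup_succ := adicFiltration_le_span_monomialFamily_sup x w hx hw

lemma smul_mem_tailSubmodule_monomialFamily (hx : Ideal.span (Set.range x) = I)
    (β : DegLex (σ →₀ ℕ)) (p : DegLex (σ →₀ ℕ) ×ₗ κ) {m : M}
    (hm : m ∈ tailSubmodule (adicFiltration A I M) monomialDegree (monomialFamily x w) p) :
    (ofDegLex β).prod (x · ^ ·) • m ∈
      tailSubmodule (adicFiltration A I M) monomialDegree (monomialFamily x w)
        (monomialShift β p) := by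
  obtain ⟨y, hy, z, hz, rfl⟩ := mem_sup.1 hm
  rw [smul_add]
  refine add_mem (mem_sup_left (smul_mem_of_mem_span _ ?_ hy)) (mem_sup_right ?_)
  · rintro _ ⟨q, hq, rfl⟩
    rw [smul_monomialFamily]
    exact subset_span ⟨_, monomialShift_strictMono β hq, rfl⟩
  · rw [monomialDegree_monomialShift, add_assoc]
    exact smul_mem_adicFiltration_add (hx ▸ finsuppProd_mem_span_range_pow x _) hz

/-- The leading coefficients that can be eliminated at the index `(α, k)`. -/
noncomputable def leadingCoeffIdeal (I : Ideal R) (k : κ) (α : σ →₀ ℕ) : Ideal A :=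
  (tailSubmodule (adicFiltration A I M) monomialDegree (monomialFamily x w)
    (toLex (toDegLex α, k))).comap
    (LinearMap.toSpanSingleton A M (monomialFamily x w (toLex (toDegLex α, k))))

lemma leadingCoeffIdeal_monotone (hx : Ideal.span (Set.range x) = I) (k : κ) :
    Monotone (leadingCoeffIdeal (A := A) x w I k) := fun α β hαβ a ha => by
  have h_shift : monomialShift (toDegLex (β - α)) (toLex (toDegLex α, k)) =
      toLex (toDegLex β, k) :=
    congrArg (fun γ => toLex (toDegLex γ, k)) (tsub_add_cancel_of_le hαβ)
  have h_mem := smul_mem_tailSubmodule_monomialFamily x w hx (toDegLex (β - α)) _ ha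
  rw [LinearMap.toSpanSingleton_apply, smul_comm, smul_monomialFamily, h_shift] at h_mem
  exact h_mem

end Monomials

lemma exists_span_range_sup_eq_top (N : Submodule R M) [Module.Finite A (M ⧸ N)] :
    ∃ (s : ℕ) (w : Fin s → M), span A (Set.range w) ⊔ N.restrictScalars A = ⊤ := by
  obtain ⟨s, w', hw'⟩ := Module.Finite.exists_fin (R := A) (M := M ⧸ N)
  choose w hw using fun k => Submodule.mkQ_surjective N (w' k)
  refine ⟨s, w, ?_⟩
  have map_eq_top : (span A (Set.range w)).map (N.mkQ.restrictScalars A) = ⊤ := by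
    rw [map_span, ← Set.range_comp, ← hw']
    exact congrArg (fun f => span A (Set.range f)) (funext hw)
  have h_ker : LinearMap.ker (N.mkQ.restrictScalars A) = N.restrictScalars A := by
    rw [LinearMap.ker_restrictScalars, ker_mkQ]
  rw [← h_ker, ← comap_map_eq, map_eq_top, comap_top]

theorem exists_isGenericDualBasis_adicFiltration [IsDomain A] (hI : I.FG)
    [Module.Finite A (M ⧸ (I • ⊤ : Submodule R M))] :
    ∃ g : A, g ≠ 0 ∧ ∃ (ι : Type) (deg : ι → ℕ) (b : ι → M) (φ : ι → M →ₗ[A] A),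
      IsGenericDualBasis (adicFiltration A I M) g deg b φ := by
  obtain ⟨n, x, hx⟩ := Submodule.fg_iff_exists_fin_generating_family.1 hI
  obtain ⟨s, w, hw⟩ := exists_span_range_sup_eq_top (A := A) (I • ⊤ : Submodule R M)
  obtain ⟨g, hg0, hg⟩ := exists_ne_zero_forall_eq_bot_or_mem_of_monotone
    (leadingCoeffIdeal (A := A) x w I) (leadingCoeffIdeal_monotone x w hx)
  obtain ⟨S, φ, hφ⟩ := (isAdaptedFamily_monomialFamily x w hx hw).exists_isGenericDualBasis
    (g := g) fun p => (hg (ofLex p).2 (ofDegLex (ofLex p).1)).imp_left fun h_bot a ha =>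
      (Submodule.mem_bot A).1 (h_bot ▸ ha)
  exact ⟨g, hg0, S, _, _, φ, hφ⟩

section ScalarExtension

variable {L : Type*} [CommRing L] [Algebra A L] {g : A}

lemma isSMulRegular_of_isUnit_algebraMap (hg : IsUnit (algebraMap A L g)) : IsSMulRegular L g :=
  fun x y hxy => hg.mul_left_cancel (by simpa only [Algebra.smul_def] using hxy)

lemma mem_of_pow_smul_mem {V : Type*} [AddCommGroup V] [Module A V] [Module L V]
    [IsScalarTower A L V] (hg : IsUnit (algebraMap A L g)) {N : Submodule L V} {e : ℕ} {v : V}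
    (hv : g ^ e • v ∈ N) : v ∈ N := by
  rw [← algebraMap_smul L, map_pow] at hv
  exact (N.smul_mem_iff_of_isUnit (hg.pow e)).1 hv

lemma span_tmul_eq_top {V ι : Type*} [AddCommGroup V] [Module A V] {v : ι → V}
    (hg : IsUnit (algebraMap A L g)) (hv : ∀ x, ∃ e : ℕ, g ^ e • x ∈ span A (Set.range v)) :
    span L (Set.range fun i => (1 : L) ⊗ₜ[A] v i) = ⊤ := by
  rw [eq_top_iff, ← baseChange_top, baseChange_eq_span, span_le]
  rintro _ ⟨x, -, rfl⟩
  obtain ⟨e, he⟩ := hv x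
  refine mem_of_pow_smul_mem hg (e := e) ?_
  have h_mem := tmul_mem_baseChange_of_mem (1 : L) he
  rw [baseChange_span, ← Set.range_comp] at h_mem
  simpa only [Function.comp_def, TensorProduct.mk_apply, TensorProduct.tmul_smul] using h_mem

end ScalarExtension

namespace IsGenericDualBasis

variable {ι : Type*} {F : ℕ → Submodule A M} {g : A} {deg : ι → ℕ} {b : ι → M}
  {φ : ι → M →ₗ[A] A} (h : IsGenericDualBasis F g deg b φ)
include h

lemma eq_zero_of_apply_eq_zero {V : Type*} [AddCommGroup V] [Module A V]
    (hg : IsSMulRegular V g) {t : ℕ} {χ : M →ₗ[A] V} (hF : F t ≤ LinearMap.ker χ)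
    (hb : ∀ i, deg i < t → χ (b i) = 0) : χ = 0 := by
  ext m
  obtain ⟨e, he⟩ := h.exists_pow_smul_mem t
  have h_le : span A (b '' {i | deg i < t}) ⊔ F t ≤ LinearMap.ker χ :=
    sup_le (span_le.2 (Set.image_subset_iff.2 hb)) hF
  refine (hg.pow e).right_eq_zero_of_smul ?_
  rw [← map_smul]
  exact h_le (he m)

variable {L : Type*} [CommRing L] [Algebra A L]

lemma exists_pow_smul_mem_span (hg : IsSMulRegular L g) {t : ℕ} {χ : M →ₗ[A] L}
    (hF : F t ≤ LinearMap.ker χ) :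
    ∃ e : ℕ, g ^ e • χ ∈ span L (Set.range fun i => Algebra.linearMap A L ∘ₗ φ i) := by
  choose e he using h.apply_self
  set T := (h.finite_deg_lt t).toFinset
  have mem_T {i : ι} : i ∈ T ↔ deg i < t := (h.finite_deg_lt t).mem_toFinset
  set E := ∑ i ∈ T, e i
  let c (i : ι) : L := g ^ (E - e i) • χ (b i)
  -- `χ = ∑ (χ (b i) / φ i (b i)) • φ i`, with the denominators cleared by `g ^ E`.
  have h_zero : g ^ E • χ - ∑ i ∈ T, c i • Algebra.linearMap A L ∘ₗ φ i = 0 := by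
    refine h.eq_zero_of_apply_eq_zero hg (t := t) (fun m hm => ?_) fun j hj => ?_
    · have φ_eq_zero : ∀ i ∈ T, φ i m = 0 := fun i hi => h.le_ker (mem_T.1 hi) hm
      have χ_eq_zero : χ m = 0 := hF hm
      simp +contextual [φ_eq_zero, χ_eq_zero]
    · have e_le : e j ≤ E := Finset.single_le_sum_of_canonicallyOrdered (mem_T.2 hj)
      have h_cancel : c j * algebraMap A L (g ^ e j) = g ^ E • χ (b j) := by
        rw [mul_comm, ← Algebra.smul_def, smul_smul, ← pow_add, Nat.add_sub_cancel' e_le]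
      rw [LinearMap.sub_apply, LinearMap.sum_apply, Finset.sum_eq_single_of_mem j (mem_T.2 hj)
        fun i _ hij => by simp [h.apply_of_ne i j hij]]
      simp [he, ← h_cancel]
  refine ⟨E, ?_⟩
  rw [sub_eq_zero.1 h_zero]
  exact sum_mem fun i _ => smul_mem _ _ (subset_span ⟨i, rfl⟩)

lemma linearIndependent_algebraMap_comp (hg : IsSMulRegular L g) :
    LinearIndependent L fun i => Algebra.linearMap A L ∘ₗ φ i := by
  rw [linearIndependent_iff]
  intro l hl
  ext j
  obtain ⟨e, he⟩ := h.apply_self j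
  refine (hg.pow e).right_eq_zero_of_smul ?_
  have h_apply := LinearMap.congr_fun hl (b j)
  rw [Finsupp.linearCombination_apply, Finsupp.sum, LinearMap.sum_apply,
    Finset.sum_eq_single j (fun i _ hij => by simp [h.apply_of_ne i j hij])
      (fun hj => by simp [Finsupp.notMem_support_iff.1 hj])] at h_apply
  simpa [he, Algebra.smul_def, mul_comm] using h_apply

end IsGenericDualBasis

lemma adicFiltration_le_ker_iff {V : Type*} [AddCommGroup V] [Module A V] {t : ℕ}
    {χ : M →ₗ[A] V} :
    adicFiltration A I M t ≤ LinearMap.ker χ ↔ ∀ r ∈ I ^ t, ∀ m : M, χ (r • m) = 0 := by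
  refine ⟨fun h r hr m => ?_, fun h m hm => ?_⟩
  · have h_mem : r • m ∈ (I ^ t • ⊤ : Submodule R M) := Submodule.smul_mem_smul hr mem_top
    exact h h_mem
  · rw [mem_adicFiltration] at hm
    exact Submodule.smul_induction_on (p := fun m => χ m = 0) hm (fun r hr m _ => h r hr m)
      fun x y hx hy => by rw [map_add, hx, hy, add_zero]

namespace ContinuousDual

lemma mem_iff_exists_le_ker {φ : M →ₗ[A] A} :
    φ ∈ ContinuousDual A R I M ↔ ∃ t, adicFiltration A I M t ≤ LinearMap.ker φ :=
  exists_congr fun _ => adicFiltration_le_ker_iff.symm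

section BaseChange

variable {L R' N : Type*} [CommRing L] [Algebra A L] [CommRing R'] [Algebra L R']
  [AddCommGroup N] [Module A N] [Module L N] [Module R N] [Module R' N]
  [IsScalarTower A L N] [IsScalarTower A R N] {f : M →ₗ[R] N}

/-- Restriction of continuous `L`-linear functionals along an `R`-linear map `f : M → N`. -/
def restrict (J : Ideal R') (f : M →ₗ[R] N) : ContinuousDual L R' J N →ₗ[L] M →ₗ[A] L where
  toFun χ := χ.1.restrictScalars A ∘ₗ f.restrictScalars A
  map_add' _ _ := rfl
  map_smul' _ _ := rfl

variable (hf : IsBaseChange L (f.restrictScalars A))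

include hf in
lemma restrict_injective (J : Ideal R') :
    Function.Injective (restrict (A := A) (L := L) J f) := fun _ _ h =>
  Subtype.ext (hf.algHom_ext _ _ (LinearMap.congr_fun h))

variable [Algebra R R'] [IsScalarTower L R' N] [IsScalarTower R R' N]

include hf in
lemma mem_iff_of_isBaseChange {χ : N →ₗ[L] L} :
    χ ∈ ContinuousDual L R' (I.map (algebraMap R R')) N ↔
      ∃ t, adicFiltration A I M t ≤
        LinearMap.ker (χ.restrictScalars A ∘ₗ f.restrictScalars A) := by
  refine exists_congr fun t => Iff.trans ⟨fun h r hr m => ?_, fun h s hs => ?_⟩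
    adicFiltration_le_ker_iff.symm
  · have hr' : algebraMap R R' r ∈ I.map (algebraMap R R') ^ t :=
      Ideal.map_pow (algebraMap R R') I t ▸ Ideal.mem_map_of_mem _ hr
    simpa using h _ hr' (f m)
  · rw [← Ideal.map_pow] at hs
    refine span_induction (p := fun s _ => ∀ n, χ (s • n) = 0) ?_ ?_ ?_ ?_ hs
    · rintro _ ⟨r, hr, rfl⟩ n
      induction n using hf.inductionOn with
      | zero => rw [smul_zero, map_zero]
      | tmul m => simpa using h r hr m
      | smul ℓ n hn => rw [smul_algebra_smul_comm, map_smul, hn, smul_zero]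
      | add n n' hn hn' => rw [smul_add, map_add, hn, hn', add_zero]
    · exact fun n => by rw [zero_smul, map_zero]
    · exact fun s s' _ _ hs hs' n => by rw [add_smul, map_add, hs, hs', add_zero]
    · exact fun c s _ hs n => by rw [smul_eq_mul, mul_comm, mul_smul, hs]

lemma linearMapLeftRightHom_mem {φ : M →ₗ[A] A} (hφ : φ ∈ ContinuousDual A R I M) :
    hf.linearMapLeftRightHom (Algebra.linearMap A L) φ ∈
      ContinuousDual L R' (I.map (algebraMap R R')) N := by
  obtain ⟨t, ht⟩ := mem_iff_exists_le_ker.1 hφ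
  refine (mem_iff_of_isBaseChange hf).2 ⟨t, ?_⟩
  rw [hf.linearMapLeftRightHom_comp]
  exact ht.trans (LinearMap.ker_le_ker_comp _ _)

/-- Extension of continuous functionals along a base change `f : M → N`: it sends `φ` to the
`L`-linear map `f m ↦ φ m`. -/
noncomputable def extend :
    ContinuousDual A R I M →ₗ[A] ContinuousDual L R' (I.map (algebraMap R R')) N where
  toFun φ := ⟨_, linearMapLeftRightHom_mem hf φ.2⟩
  map_add' φ ψ := Subtype.ext (map_add (hf.linearMapLeftRightHom _) φ.1 ψ.1)
  map_smul' a φ := Subtype.ext (map_smul (hf.linearMapLeftRightHom _) a φ.1)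

/-- The comparison map `L ⊗ Hom_A^cts(M, A) → Hom_L^cts(N, L)` for a base change `f : M → N`: it
sends `ℓ ⊗ φ` to the `L`-linear map `f m ↦ ℓ * φ m`. -/
noncomputable def baseChangeHom :
    L ⊗[A] ContinuousDual A R I M →ₗ[L] ContinuousDual L R' (I.map (algebraMap R R')) N :=
  (extend hf).liftBaseChange L

lemma baseChangeHom_tmul_apply (ℓ : L) (φ : ContinuousDual A R I M) (m : M) :
    (baseChangeHom (R' := R') hf (ℓ ⊗ₜ φ) : N →ₗ[L] L) (f m) = ℓ * algebraMap A L (φ.1 m) := by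
  rw [baseChangeHom, LinearMap.liftBaseChange_tmul]
  exact congrArg (ℓ * ·) (hf.linearMapLeftRightHom_comp_apply (Algebra.linearMap A L) φ.1 m)

lemma restrict_baseChangeHom_one_tmul (φ : ContinuousDual A R I M) :
    restrict _ f (baseChangeHom (R' := R') hf (1 ⊗ₜ φ)) = Algebra.linearMap A L ∘ₗ φ.1 := by
  ext m
  exact (baseChangeHom_tmul_apply hf 1 φ m).trans (one_mul _)

end BaseChange

end ContinuousDual

namespace IsGenericDualBasis

variable {ι : Type*} {g : A} {deg : ι → ℕ} {b : ι → M} {φ : ι → M →ₗ[A] A}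
  (h : IsGenericDualBasis (adicFiltration A I M) g deg b φ)

/-- The functionals of a generic dual basis for the `I`-adic filtration, as elements of the
continuous dual. -/
def continuousDual (i : ι) : ContinuousDual A R I M :=
  ⟨φ i, ContinuousDual.mem_iff_exists_le_ker.2 ⟨deg i + 1, h.le_ker (deg i).lt_succ_self⟩⟩

variable {L : Type*} [CommRing L] [Algebra A L]

lemma span_continuousDual_eq_top (hg : IsSMulRegular A g) (hL : IsUnit (algebraMap A L g)) :
    span L (Set.range fun i => (1 : L) ⊗ₜ[A] h.continuousDual i) = ⊤ := by
  refine span_tmul_eq_top (v := h.continuousDual) hL fun ψ => ?_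
  obtain ⟨t, ht⟩ := ContinuousDual.mem_iff_exists_le_ker.1 ψ.2
  obtain ⟨e, he⟩ := h.exists_pow_smul_mem_span hg ht
  refine ⟨e, (apply_mem_span_image_iff_mem_span (ContinuousDual A R I M).subtype_injective).1 ?_⟩
  rwa [← Set.range_comp]

lemma linearIndependent_continuousDual (hL : IsUnit (algebraMap A L g)) :
    LinearIndependent L fun i => (1 : L) ⊗ₜ[A] h.continuousDual i := by
  let toHom : L ⊗[A] ContinuousDual A R I M →ₗ[L] M →ₗ[A] L := LinearMap.liftBaseChange L
    (LinearMap.compRight A (Algebra.linearMap A L) ∘ₗ (ContinuousDual A R I M).subtype)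
  refine LinearIndependent.of_comp toHom ?_
  convert h.linearIndependent_algebraMap_comp (isSMulRegular_of_isUnit_algebraMap hL) with i
  exact (LinearMap.liftBaseChange_tmul L _ _ _).trans (one_smul L _)

include h

lemma free_baseChange_continuousDual (hg : IsSMulRegular A g) (hL : IsUnit (algebraMap A L g)) :
    Module.Free L (L ⊗[A] ContinuousDual A R I M) :=
  .of_basis (.mk (h.linearIndependent_continuousDual hL)
    (h.span_continuousDual_eq_top hg hL).ge)

variable {R' N : Type*} [CommRing R'] [Algebra L R'] [Algebra R R']
  [AddCommGroup N] [Module A N] [Module L N] [Module R N] [Module R' N]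
  [IsScalarTower A L N] [IsScalarTower A R N] [IsScalarTower L R' N] [IsScalarTower R R' N]
  {f : M →ₗ[R] N} (hf : IsBaseChange L (f.restrictScalars A))

lemma restrict_comp_baseChangeHom :
    (ContinuousDual.restrict _ f ∘ fun i =>
      ContinuousDual.baseChangeHom (I := I) (R' := R') hf (1 ⊗ₜ h.continuousDual i)) =
      fun i => Algebra.linearMap A L ∘ₗ φ i :=
  funext fun _ => ContinuousDual.restrict_baseChangeHom_one_tmul hf _

lemma linearIndependent_baseChangeHom (hL : IsUnit (algebraMap A L g)) :
    LinearIndependent L fun i =>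
      ContinuousDual.baseChangeHom (I := I) (R' := R') hf (1 ⊗ₜ h.continuousDual i) := by
  refine LinearIndependent.of_comp (ContinuousDual.restrict (A := A) _ f) ?_
  rw [h.restrict_comp_baseChangeHom hf]
  exact h.linearIndependent_algebraMap_comp (isSMulRegular_of_isUnit_algebraMap hL)

lemma span_baseChangeHom_eq_top (hL : IsUnit (algebraMap A L g)) :
    span L (Set.range fun i =>
      ContinuousDual.baseChangeHom (I := I) (R' := R') hf (1 ⊗ₜ h.continuousDual i)) = ⊤ := by
  refine eq_top_iff.2 fun χ _ => ?_
  obtain ⟨t, ht⟩ := (ContinuousDual.mem_iff_of_isBaseChange hf).1 χ.2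
  obtain ⟨e, he⟩ := h.exists_pow_smul_mem_span (isSMulRegular_of_isUnit_algebraMap hL) ht
  rw [← apply_mem_span_image_iff_mem_span (ContinuousDual.restrict_injective hf _),
    ← Set.range_comp, h.restrict_comp_baseChangeHom hf]
  exact mem_of_pow_smul_mem hL he

theorem bijective_baseChangeHom (hg : IsSMulRegular A g) (hL : IsUnit (algebraMap A L g)) :
    Function.Bijective (ContinuousDual.baseChangeHom (I := I) (R' := R') hf) :=
  LinearMap.bijective_of_linearIndependent_of_span_eq_top
    (N := ContinuousDual L R' (I.map (algebraMap R R')) N)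
    (h.span_continuousDual_eq_top hg hL) (h.linearIndependent_baseChangeHom hf hL)
    (h.span_baseChangeHom_eq_top hf hL)

end IsGenericDualBasis

lemma isBaseChange_mk_one (A R M L : Type*) [CommRing A] [CommRing R] [Algebra A R]
    [AddCommGroup M] [Module A M] [Module R M] [IsScalarTower A R M] [CommRing L] [Algebra A L] :
    IsBaseChange L ((TensorProduct.mk R (R ⊗[A] L) M 1).restrictScalars A) :=
  .of_equiv (Algebra.IsPushout.cancelBaseChange A L R (R ⊗[A] L) M).symm fun m => by simp

lemma tmul_tmul_eq_smul {A R M L : Type*} [CommRing A] [CommRing R] [Algebra A R]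
    [AddCommGroup M] [Module R M] [CommRing L] [Algebra A L] (r : R) (ℓ : L) (m : M) :
    (r ⊗ₜ[A] ℓ) ⊗ₜ[R] m = ℓ • ((1 : R ⊗[A] L) ⊗ₜ[R] (r • m)) := by
  have h_smul : r ⊗ₜ[A] ℓ = ℓ • r • (1 : R ⊗[A] L) := by
    rw [Algebra.smul_def, Algebra.smul_def, mul_one]
    change _ = (1 ⊗ₜ ℓ) * (r ⊗ₜ[A] 1)
    rw [Algebra.TensorProduct.tmul_mul_tmul, one_mul, mul_one]
  rw [h_smul, ← TensorProduct.smul_tmul', TensorProduct.smul_tmul]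

theorem stmt9_general (A : Type) [CommRing A] [IsDomain A] (R : Type) [CommRing R] [Algebra A R]
    {I : Ideal R} (hI : I.FG) (M : Type) [AddCommGroup M] [Module A M] [Module R M]
    [IsScalarTower A R M] [Module.Finite A (M ⧸ (I • ⊤ : Submodule R M))] :
    ∃ g : A, g ≠ 0 ∧ ∀ (L : Type) [CommRing L] [Algebra A L], IsUnit (algebraMap A L g) →
      Module.Free L (L ⊗[A] ContinuousDual A R I M) ∧
        ∃ e : (L ⊗[A] ContinuousDual A R I M) ≃ₗ[L]
            ContinuousDual L (R ⊗[A] L) (I.map (algebraMap R (R ⊗[A] L))) ((R ⊗[A] L) ⊗[R] M),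
          ∀ (φ : ContinuousDual A R I M) (ℓ ℓ' : L) (r : R) (m : M),
            (e (ℓ ⊗ₜ[A] φ) : ((R ⊗[A] L) ⊗[R] M) →ₗ[L] L) ((r ⊗ₜ[A] ℓ') ⊗ₜ[R] m) =
              (φ : M →ₗ[A] A) (r • m) • (ℓ * ℓ') := by
  obtain ⟨g, hg, ι, deg, b, φ, h⟩ :=
    exists_isGenericDualBasis_adicFiltration (A := A) (M := M) hI
  have g_regular : IsSMulRegular A g := fun x y hxy => mul_left_cancel₀ hg hxy
  refine ⟨g, hg, fun L _ _ hL => ⟨h.free_baseChange_continuousDual g_regular hL, ?_⟩⟩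
  have hf := isBaseChange_mk_one A R M L
  refine ⟨.ofBijective _ (h.bijective_baseChangeHom (R' := R ⊗[A] L) hf g_regular hL),
    fun ψ ℓ ℓ' r m => ?_⟩
  have h_apply := ContinuousDual.baseChangeHom_tmul_apply (R' := R ⊗[A] L) hf ℓ ψ (r • m)
  rw [tmul_tmul_eq_smul, map_smul, LinearEquiv.ofBijective_apply, smul_eq_mul,
    Algebra.smul_def]
  exact (congrArg (ℓ' * ·) h_apply).trans (by ring)

/-- **Generic freeness and base change for the relative Matlis dual.**  Let `A` be a Noetherian
domain, `R` a Noetherian `A`-algebra, `I ⊆ R` an ideal with `R/I` a finitely generated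
`A`-module, and `M` a finitely generated `R`-module.  There is a nonzero `g ∈ A` such that
`Hom_A^cts(M, A) ⊗[A] A_g` is a free `A_g`-module and, for every commutative `A`-algebra `L`
whose structure map factors through `A_g` (equivalently, in which `g` becomes a unit), the
natural map `Hom_A^cts(M, A) ⊗[A] L → Hom_L^cts(M ⊗[A] L, L)`, `φ ⊗ ℓ ↦ (m ⊗ ℓ' ↦ φ(m)·ℓℓ')`,
is an isomorphism (it is automatically `R ⊗[A] L`-linear, being determined by the stated values
on pure tensors; here `M ⊗[A] L` is realized as `(R ⊗[A] L) ⊗[R] M` and `Hom_L^cts` is taken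
with respect to the extended ideal `I·(R ⊗[A] L)`). -/
theorem stmt9 (A : Type) [CommRing A] [IsDomain A] [IsNoetherianRing A]
    (R : Type) [CommRing R] [Algebra A R] [IsNoetherianRing R]
    (I : Ideal R) [Module.Finite A (R ⧸ I)]
    (M : Type) [AddCommGroup M] [Module A M] [Module R M] [IsScalarTower A R M]
    [Module.Finite R M] :
    ∃ g : A, g ≠ 0 ∧
      Module.Free (Localization.Away g)
        (TensorProduct A (Localization.Away g) (ContinuousDual A R I M)) ∧
      ∀ (L : Type) [CommRing L] [Algebra A L], IsUnit (algebraMap A L g) →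
        ∃ e : (TensorProduct A L (ContinuousDual A R I M)) ≃ₗ[L]
            ContinuousDual L (R ⊗[A] L) (Ideal.map (algebraMap R (R ⊗[A] L)) I)
              ((R ⊗[A] L) ⊗[R] M),
          ∀ (φ : ContinuousDual A R I M) (ℓ ℓ' : L) (r : R) (m : M),
            (e (ℓ ⊗ₜ[A] φ) : ((R ⊗[A] L) ⊗[R] M) →ₗ[L] L) ((r ⊗ₜ[A] ℓ') ⊗ₜ[R] m) =
              (φ : M →ₗ[A] A) (r • m) • (ℓ * ℓ') := by
  have : Module.Finite A (M ⧸ (I • ⊤ : Submodule R M)) := .trans (R ⧸ I) _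
  obtain ⟨g, hg, h⟩ := stmt9_general A R (IsNoetherian.noetherian I) M
  exact ⟨g, hg, (h _ (IsLocalization.Away.algebraMap_isUnit g)).1, fun L _ _ hL => (h L hL).2⟩
end

section
/- Let A be a commutative Noetherian ring, let R = A[[x_1, ..., x_n]] be the power series ring over A, and let I = (x_1, ..., x_n) ⊆ R. Then there is an R-module isomorphism between the top local cohomology module H^n_I(R) and Hom_A^cts(R, A). -/
variable {A : Type*} [CommRing A] {R : Type*} [CommRing R] [Algebra A R]
  {I : Ideal R} {M : Type*} [AddCommGroup M] [Module A M] [Module R M] [IsScalarTower A R M]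

/-!
Write `R = A⟦x₁, …, xₙ⟧` and let `E` be the module of Laurent series modulo sums of series each
without poles along one of the divisors `xᵢ = 0`. Allowing poles along one variable after another
gives `n` short exact sequences linking `R` to `E`. A power of the newly inverted variable acts
invertibly on the middle term but as zero on `R ⧸ Iᵗ`, so the middle term has no `Ext` from
`R ⧸ Iᵗ`, and the product `α ∈ Extⁿ(E, R)` of the extension classes induces isomorphisms
`Hom(R ⧸ Iᵗ, E) ≃ Extⁿ(R ⧸ Iᵗ, R)`. As every element of `E` is killed by a power of `I`, the colimit
over `t` is `Hⁿ_I(R) ≃ E`. Finally, pairing a power series `r` with a Laurent series `f` to the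
coefficient of `(x₁ ⋯ xₙ)⁻¹` in `r f` identifies `E` with the continuous dual of `R`.
-/

section YonedaProduct

open CategoryTheory Abelian

universe w v u t

variable {S : Type t} [CommRing S] {C : Type u} [Category.{v} C] [Abelian C] [HasExt.{w} C]

/-- Yoneda multiplication by `α : Ext Y Z n` is an isomorphism `Ext X Y i ≃ Ext X Z (i + n)` in
every degree `i`. -/
def PostcompBijective (X : C) {Y Z : C} {n : ℕ} (α : Ext Y Z n) : Prop :=
  ∀ ⦃i j : ℕ⦄ (h : i + n = j), Function.Bijective (α.postcomp X h)

namespace PostcompBijective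

variable {X Y Z W : C} {m n : ℕ}

lemma comp {α : Ext Y Z m} {β : Ext Z W n} (hα : PostcompBijective X α)
    (hβ : PostcompBijective X β) {k : ℕ} (h : m + n = k) : PostcompBijective X (α.comp β h) := by
  intro i j hij
  convert (hβ (show i + m + n = j by lia)).comp (hα rfl) using 1
  ext x
  exact (Ext.comp_assoc x α β rfl h (by lia)).symm

lemma mk₀_iso (X : C) (e : Y ≅ Z) : PostcompBijective X (Ext.mk₀ e.hom) := by
  rintro i j (rfl : i = j)
  exact Function.bijective_iff_has_inverse.mpr
    ⟨(Ext.mk₀ e.inv).postcomp X (add_zero i), fun x => by simp, fun x => by simp⟩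

lemma extClass (X : C) {T : ShortComplex C} (hT : T.ShortExact)
    (h : ∀ i, Subsingleton (Ext X T.X₂ i)) : PostcompBijective X hT.extClass := by
  refine fun i j hij => ⟨(injective_iff_map_eq_zero _).mpr fun x hx => ?_, fun y => ?_⟩
  · obtain ⟨y, rfl⟩ := Ext.covariant_sequence_exact₃ X hT x hij hx
    rw [Subsingleton.elim y 0, Ext.zero_comp]
  · exact Ext.covariant_sequence_exact₁ X hT y (Subsingleton.elim _ _) hij

end PostcompBijective

lemma subsingleton_ext_of_smul_id_eq_zero [Linear S C] {X Y : C} (r : S) (hX : r • 𝟙 X = 0)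
    [IsIso (r • 𝟙 Y)] (i : ℕ) : Subsingleton (Ext X Y i) := by
  refine subsingleton_of_forall_eq 0 fun y => ?_
  have hy : y.comp (Ext.mk₀ (r • 𝟙 Y)) (add_zero i) = 0 := by
    rw [← Ext.smul_eq_comp_mk₀, ← Ext.mk₀_id_comp y, ← Ext.smul_comp, ← Ext.mk₀_smul, hX,
      Ext.mk₀_zero, Ext.zero_comp]
  refine (PostcompBijective.mk₀_iso X (asIso (r • 𝟙 Y)) (add_zero i)).injective ?_
  simpa using hy

end YonedaProduct

section ExtComparison

open CategoryTheory Opposite Abelian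

universe w v u t

lemma exists_linearEquiv_of_ker_eq {S M N P : Type*} [Ring S] [AddCommGroup M] [AddCommGroup N]
    [AddCommGroup P] [Module S M] [Module S N] [Module S P] {f : M →ₗ[S] N} {g : M →ₗ[S] P}
    (hf : Function.Surjective f) (hg : Function.Surjective g)
    (h : LinearMap.ker f = LinearMap.ker g) : ∃ e : N ≃ₗ[S] P, ∀ x, e (f x) = g x :=
  ⟨(f.quotKerEquivOfSurjective hf).symm ≪≫ₗ Submodule.quotEquivOfEq _ _ h ≪≫ₗ
    g.quotKerEquivOfSurjective hg, fun x => by simp⟩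

section HomologicalComplex

variable {S : Type t} [Ring S] {ι : Type*} {c : ComplexShape ι}
  (K : HomologicalComplex (ModuleCat.{v} S) c) {i j : ι}

lemma iCycles_injective : Function.Injective (K.iCycles i) :=
  (ModuleCat.mono_iff_injective _).mp inferInstance

lemma exists_iCycles_eq (h : c.next i = j) {x : K.X i} (hx : K.d i j x = 0) :
    ∃ z, K.iCycles i z = x :=
  ⟨K.cyclesMk x j h hx, K.i_cyclesMk x j h hx⟩

lemma homologyπ_eq_zero_iff (h : c.prev j = i) (z : K.cycles j) :
    K.homologyπ j z = 0 ↔ ∃ x, K.d i j x = K.iCycles j z := by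
  have iCycles_toCycles (x) : K.iCycles j (K.toCycles i j x) = K.d i j x :=
    ConcreteCategory.congr_hom (K.toCycles_i i j) x
  have exact := (ShortComplex.moduleCat_exact_iff_range_eq_ker _).mp <|
    ShortComplex.exact_of_g_is_cokernel (ShortComplex.mk _ _ (K.toCycles_comp_homologyπ i j))
      (K.homologyIsCokernel i j h)
  simp only [← iCycles_toCycles, (iCycles_injective K).eq_iff]
  exact (SetLike.ext_iff.mp exact z).symm

end HomologicalComplex

variable {S : Type t} [CommRing S] {C : Type u} [Category.{v} C] [Abelian C] [Linear S C]
  {N N' Y : C} {P : ProjectiveResolution N} {P' : ProjectiveResolution N'} {n : ℕ}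

/-- The cocycles of degree `n` of the complex `Hom(P, Y)`. -/
noncomputable abbrev extCocycles (S : Type t) [CommRing S] {C : Type u} [Category.{v} C]
    [Abelian C] [Linear S C] {N : C} (P : ProjectiveResolution N) (Y : C) (n : ℕ) :
    ModuleCat.{v} S :=
  (P.complex.linearYonedaObj S Y).cycles n

/-- The map `Hom(P', Y) ⟶ Hom(P, Y)` of complexes induced by a chain map `P ⟶ P'`. -/
noncomputable def linearYonedaObjMap (S : Type t) [CommRing S] [Linear S C]
    {K L : ChainComplex C ℕ} (φ : K ⟶ L) (Y : C) :
    L.linearYonedaObj S Y ⟶ K.linearYonedaObj S Y :=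
  (HomologicalComplex.unopFunctor _ _).map
    ((((linearYoneda S C).obj Y).rightOp.mapHomologicalComplex _).map φ).op

namespace extCocycles

/-- The map `Pₙ ⟶ Y` underlying a cocycle. -/
noncomputable def toHom (z : extCocycles S P Y n) : P.complex.X n ⟶ Y :=
  (P.complex.linearYonedaObj S Y).iCycles n z

lemma d_comp_toHom (z : extCocycles S P Y n) : P.complex.d (n + 1) n ≫ toHom z = 0 :=
  ConcreteCategory.congr_hom ((P.complex.linearYonedaObj S Y).iCycles_d n (n + 1)) z

lemma toHom_add (z w : extCocycles S P Y n) : toHom (z + w) = toHom z + toHom w :=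
  map_add _ z w

lemma toHom_smul (s : S) (z : extCocycles S P Y n) : toHom (s • z) = s • toHom z :=
  map_smul ((P.complex.linearYonedaObj S Y).iCycles n).hom s z

lemma toHom_cyclesMap {f : N ⟶ N'} (φ : P.Hom P' f) (z : extCocycles S P' Y n) :
    toHom (HomologicalComplex.cyclesMap (linearYonedaObjMap S φ.hom Y) n z) =
      φ.hom.f n ≫ toHom z :=
  ConcreteCategory.congr_hom
    (HomologicalComplex.cyclesMap_i (linearYonedaObjMap S φ.hom Y) n) z

variable [HasExt.{w} C]

/-- The Yoneda `Ext` class of a cocycle. -/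
noncomputable def toExt : extCocycles S P Y n →ₗ[S] Abelian.Ext.{w} N Y n where
  toFun z := P.extMk (toHom z) (n + 1) rfl (d_comp_toHom z)
  map_add' z w := by simp only [toHom_add, P.add_extMk]
  map_smul' s z := by
    simp only [toHom_smul, RingHom.id_apply, Ext.smul_eq_comp_mk₀, P.extMk_comp_mk₀,
      Linear.comp_smul, Category.comp_id]

lemma toExt_apply (z : extCocycles S P Y n) :
    toExt.{w} z = P.extMk (toHom z) (n + 1) rfl (d_comp_toHom z) := rfl

lemma toExt_surjective :
    Function.Surjective (toExt : extCocycles S P Y n →ₗ[S] Abelian.Ext.{w} N Y n) := by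
  intro x
  obtain ⟨f, hf, rfl⟩ := P.extMk_surjective x (n + 1) rfl
  obtain ⟨z, rfl⟩ := exists_iCycles_eq (P.complex.linearYonedaObj S Y) (by simp) hf
  exact ⟨z, rfl⟩

lemma toExt_cyclesMap {f : N ⟶ N'} (φ : P.Hom P' f) (z : extCocycles S P' Y n) :
    toExt.{w} (HomologicalComplex.cyclesMap (linearYonedaObjMap S φ.hom Y) n z) =
      (Ext.mk₀ f).comp (toExt z) (zero_add n) := by
  simp only [toExt_apply, ProjectiveResolution.mk₀_comp_extMk _ _ _ _ φ, toHom_cyclesMap]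

end extCocycles

open extCocycles

variable (P n)

lemma extMk_eq_zero_iff_exists_d_comp_eq [HasExt.{w} C] {i : ℕ}
    (hi : (ComplexShape.up ℕ).prev n = i) (f : P.complex.X n ⟶ Y)
    (hf : P.complex.d (n + 1) n ≫ f = 0) :
    P.extMk f (n + 1) rfl hf = 0 ↔ ∃ g : P.complex.X i ⟶ Y, P.complex.d n i ≫ g = f := by
  cases n with
  | succ n =>
    obtain rfl : n = i := by simpa using hi
    exact P.extMk_eq_zero_iff f (n + 1 + 1) rfl hf n rfl
  | zero =>
    obtain rfl : 0 = i := by simpa using hi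
    have d_eq_zero : P.cochainComplex.d 0 1 = 0 :=
      (P.cochainComplex.isZero_of_isStrictlyLE 0 1 (by simp)).eq_of_tgt _ _
    rw [← P.extEquivCohomologyClass.apply_eq_iff_eq,
      ProjectiveResolution.extEquivCohomologyClass_extMk,
      ProjectiveResolution.extEquivCohomologyClass_zero,
      CochainComplex.HomComplex.CohomologyClass.mk_eq_zero_iff,
      CochainComplex.HomComplex.Cocycle.toSingleMk_mem_coboundaries_iff _ _ _ _ _ 1 (by simp)]
    simp [d_eq_zero, eq_comm (a := (0 : _ ⟶ Y))]

lemma toExt_eq_zero_iff [HasExt.{w} C] (z : extCocycles S P Y n) :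
    toExt.{w} z = 0 ↔ (P.complex.linearYonedaObj S Y).homologyπ n z = 0 :=
  (extMk_eq_zero_iff_exists_d_comp_eq P n rfl _ (d_comp_toHom z)).trans
    (homologyπ_eq_zero_iff (P.complex.linearYonedaObj S Y) rfl z).symm

variable [EnoughProjectives C]

/-- The class of a cocycle in `Ext` defined as a left derived functor. -/
noncomputable def toDerivedExt : extCocycles S P Y n ⟶ ((Ext S C n).obj (op N)).obj Y :=
  (P.complex.linearYonedaObj S Y).homologyπ n ≫ (P.isoExt n Y).inv

lemma toDerivedExt_surjective : Function.Surjective (toDerivedExt (S := S) (Y := Y) P n) :=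
  (ModuleCat.epi_iff_surjective _).mp (epi_comp _ _)

lemma toDerivedExt_eq_zero_iff (z : extCocycles S P Y n) :
    toDerivedExt P n z = 0 ↔ (P.complex.linearYonedaObj S Y).homologyπ n z = 0 :=
  (P.isoExt n Y).toLinearEquiv.symm.map_eq_zero_iff

variable {P n}

lemma isoExt_inv_naturality {f : N ⟶ N'} (φ : P.Hom P' f) :
    (P'.isoExt n Y).inv ≫ ((Ext S C n).map f.op).app Y =
      HomologicalComplex.homologyMap (linearYonedaObjMap S φ.hom Y) n ≫ (P.isoExt n Y).inv := by
  have homology := congrArg Quiver.Hom.unop <|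
    HomologicalComplex.homologyOp_hom_naturality (linearYonedaObjMap S φ.hom Y) n
  have leftDerived := congrArg Quiver.Hom.unop <|
    ProjectiveResolution.isoLeftDerivedObj_hom_naturality f P P' φ.hom
      (by simpa using φ.hom_f_zero_comp_π_f_zero) ((linearYoneda S C).obj Y).rightOp n
  exact (CommSq.horiz_comp ⟨homology⟩ ⟨leftDerived⟩).w

lemma toDerivedExt_naturality {f : N ⟶ N'} (φ : P.Hom P' f) :
    toDerivedExt P' n ≫ ((Ext S C n).map f.op).app Y =
      HomologicalComplex.cyclesMap (linearYonedaObjMap S φ.hom Y) n ≫ toDerivedExt P n := by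
  simp only [toDerivedExt, Category.assoc, isoExt_inv_naturality φ,
    HomologicalComplex.homologyπ_naturality_assoc]

variable [HasExt.{w} C]

variable (P n) in
lemma exists_derivedExt_equiv : ∃ e : ((Ext S C n).obj (op N)).obj Y ≃ₗ[S] Abelian.Ext.{w} N Y n,
    ∀ z : extCocycles S P Y n, e (toDerivedExt P n z) = toExt z :=
  exists_linearEquiv_of_ker_eq (toDerivedExt_surjective P n) toExt_surjective <|
    Submodule.ext fun z => (toDerivedExt_eq_zero_iff P n z).trans (toExt_eq_zero_iff P n z).symm

variable (S N Y n) in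
/-- The comparison between the left derived functors of `Hom(-, Y)` and the Yoneda `Ext` groups, as
computed by a fixed projective resolution of `N`. -/
noncomputable def derivedExtEquiv : ((Ext S C n).obj (op N)).obj Y ≃ₗ[S] Abelian.Ext.{w} N Y n :=
  (exists_derivedExt_equiv (projectiveResolution N) n).choose

lemma derivedExtEquiv_toDerivedExt (z : extCocycles S (projectiveResolution N) Y n) :
    derivedExtEquiv.{w} S N Y n (toDerivedExt _ n z) = toExt z :=
  (exists_derivedExt_equiv (projectiveResolution N) n).choose_spec z

lemma derivedExtEquiv_naturality (f : N ⟶ N')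
    (y : ((Ext S C n).obj (op N')).obj Y) :
    derivedExtEquiv.{w} S N Y n (((Ext S C n).map f.op).app Y y) =
      (Ext.mk₀ f).comp (derivedExtEquiv S N' Y n y) (zero_add n) := by
  obtain ⟨z, rfl⟩ := toDerivedExt_surjective (projectiveResolution N') n y
  let φ : (projectiveResolution N).Hom (projectiveResolution N') f :=
    ⟨ProjectiveResolution.lift f _ _, by
      rw [← HomologicalComplex.comp_f, ProjectiveResolution.lift_commutes,
        HomologicalComplex.comp_f]⟩
  rw [derivedExtEquiv_toDerivedExt, ← toExt_cyclesMap φ, ← derivedExtEquiv_toDerivedExt]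
  exact congrArg _ (ConcreteCategory.congr_hom (toDerivedExt_naturality φ) z)

end ExtComparison

section RepresentedExt

open CategoryTheory Opposite Abelian

universe w v u t

variable {S : Type t} [CommRing S] {C : Type u} [Category.{v} C] [Abelian C] [Linear S C]
  [HasExt.{w} C] {N N' E Y : C} {n : ℕ} {α : Abelian.Ext.{w} E Y n}

namespace PostcompBijective

variable (S) in
/-- The identification `Hom(N, E) ≃ Extⁿ(N, Y)`, `φ ↦ φ * α`, given by a class `α ∈ Extⁿ(E, Y)`. -/
noncomputable def homEquiv (hα : PostcompBijective N α) : (N ⟶ E) ≃ₗ[S] Abelian.Ext N Y n :=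
  Ext.linearEquiv₀.symm ≪≫ₗ
    LinearEquiv.ofBijective (Ext.postcompOfLinear α S N (zero_add n)) (hα (zero_add n))

lemma homEquiv_apply (hα : PostcompBijective N α) (φ : N ⟶ E) :
    hα.homEquiv S φ = (Ext.mk₀ φ).comp α (zero_add n) := rfl

variable [EnoughProjectives C]

variable (S) in
/-- The identification `Extⁿ(N, Y) ≃ Hom(N, E)` for the derived functor `Ext`. -/
noncomputable def derivedExtEquivHom (hα : PostcompBijective N α) :
    ((Ext S C n).obj (op N)).obj Y ≃ₗ[S] (N ⟶ E) :=
  derivedExtEquiv.{w} S N Y n ≪≫ₗ (hα.homEquiv S).symm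

lemma derivedExtEquivHom_naturality (hα : PostcompBijective N α) (hα' : PostcompBijective N' α)
    (f : N ⟶ N') (y : ((Ext S C n).obj (op N')).obj Y) :
    hα.derivedExtEquivHom S (((Ext S C n).map f.op).app Y y) = f ≫ hα'.derivedExtEquivHom S y := by
  have h : derivedExtEquiv S N' Y n y = hα'.homEquiv S (hα'.derivedExtEquivHom S y) :=
    ((hα'.homEquiv S).apply_symm_apply _).symm
  refine (hα.homEquiv S).symm_apply_eq.mpr ((derivedExtEquiv_naturality f y).trans ?_)
  rw [h, homEquiv_apply, homEquiv_apply, Ext.mk₀_comp_mk₀_assoc]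

end PostcompBijective

end RepresentedExt

section LocalCohomology

open CategoryTheory Limits Opposite Abelian

universe v u t

lemma bijective_colimit_desc {J : Type*} [Category* J] {S : Type t} [Ring S]
    {F : J ⥤ ModuleCat.{v} S} [HasColimit F] [PreservesColimit F (forget (ModuleCat.{v} S))]
    (c : Cocone F) (injective : ∀ j, Function.Injective (c.ι.app j))
    (jointly_surjective : ∀ x : c.pt, ∃ j y, c.ι.app j y = x) :
    Function.Bijective (colimit.desc F c) := by
  have desc_ι (j) (y : F.obj j) : colimit.desc F c (colimit.ι F j y) = c.ι.app j y :=
    ConcreteCategory.congr_hom (colimit.ι_desc c j) y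
  refine ⟨(injective_iff_map_eq_zero (colimit.desc F c).hom).mpr fun x hx => ?_, fun x => ?_⟩
  · obtain ⟨j, y, rfl⟩ := Concrete.colimit_exists_rep F x
    rw [(map_eq_zero_iff (c.ι.app j).hom (injective j)).mp ((desc_ι j y).symm.trans hx), map_zero]
  · obtain ⟨j, y, rfl⟩ := jointly_surjective x
    exact ⟨_, desc_ι j y⟩

variable {S : Type u} [CommRing S]

/-- The value at `1` of a linear map out of a cyclic module `S ⧸ J`. -/
def evalOne (J : Ideal S) (E : ModuleCat.{u} S) : (ModuleCat.of S (S ⧸ J) ⟶ E) →ₗ[S] E where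
  toFun φ := φ (1 : S ⧸ J)
  map_add' _ _ := rfl
  map_smul' _ _ := rfl

lemma evalOne_injective (J : Ideal S) (E : ModuleCat.{u} S) :
    Function.Injective (evalOne J E) := by
  intro φ ψ h
  ext
  exact h

lemma exists_evalOne_eq {J : Ideal S} {E : ModuleCat.{u} S} {e : E} (he : ∀ r ∈ J, r • e = 0) :
    ∃ φ, evalOne J E φ = e :=
  ⟨ModuleCat.ofHom (J.liftQ (LinearMap.toSpanSingleton S E e) he), one_smul S e⟩

lemma nonempty_localCohomology_linearEquiv {n : ℕ} {I : Ideal S} {Y E : ModuleCat.{u} S}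
    {α : Abelian.Ext.{u} E Y n}
    (hα : ∀ t : ℕ, PostcompBijective (ModuleCat.of S (S ⧸ I ^ t)) α)
    (hE : ∀ e : E, ∃ t : ℕ, ∀ r ∈ I ^ t, r • e = 0) :
    Nonempty ((localCohomology I n).obj Y ≃ₗ[S] E) := by
  have : PreservesFilteredColimitsOfSize.{0, 0} (forget (ModuleCat.{u} S)) :=
    preservesFilteredColimitsOfSize_shrink.{0, u, 0, u} _
  let F := localCohomology.ringModIdeals (localCohomology.idealPowersDiagram I)
  let D := localCohomology.diagram (localCohomology.idealPowersDiagram I) n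
  let c : Cocone (D ⋙ (evaluation _ _).obj Y) :=
    { pt := E
      ι :=
        { app := fun t => ModuleCat.ofHom <|
            evalOne (I ^ t.unop.unop) E ∘ₗ ((hα t.unop.unop).derivedExtEquivHom S).toLinearMap
          naturality := fun t t' h => by
            ext y
            exact congrArg (evalOne _ E) <|
              (hα t'.unop.unop).derivedExtEquivHom_naturality (hα t.unop.unop) (F.map h.unop) y } }
  have hc : Function.Bijective (colimit.desc _ c) := by
    refine bijective_colimit_desc c (fun t => ?_) fun e => ?_
    · exact (evalOne_injective _ E).comp ((hα t.unop.unop).derivedExtEquivHom S).injective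
    · obtain ⟨t, ht⟩ := hE e
      obtain ⟨φ, rfl⟩ := exists_evalOne_eq ht
      refine ⟨op (op t), ((hα t).derivedExtEquivHom S).symm φ, ?_⟩
      exact congrArg (evalOne _ E) (((hα t).derivedExtEquivHom S).apply_symm_apply φ)
  exact ⟨(colimitObjIsoColimitCompEvaluation D Y).toLinearEquiv ≪≫ₗ
    LinearEquiv.ofBijective (colimit.desc _ c).hom hc⟩

end LocalCohomology

section Subquotient

open CategoryTheory

universe v u

variable {S : Type u} [CommRing S] {L : Type v} [AddCommGroup L] [Module S L]
  {P P' Q Q' : Submodule S L}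

/-- The subquotient `P / (P ∩ Q)` of a module. -/
abbrev Subquotient (P Q : Submodule S L) : Type v := P ⧸ Q.submoduleOf P

namespace Subquotient

lemma mk_eq_zero {x : P} : (Submodule.Quotient.mk x : Subquotient P Q) = 0 ↔ (x : L) ∈ Q :=
  Submodule.Quotient.mk_eq_zero _

/-- The map `P / (P ∩ Q) → P' / (P' ∩ Q')` induced by the inclusions `P ≤ P'` and `Q ≤ Q'`. -/
def map (hP : P ≤ P') (hQ : Q ≤ Q') : Subquotient P Q →ₗ[S] Subquotient P' Q' :=
  Submodule.mapQ _ _ (Submodule.inclusion hP) fun _ hx => hQ hx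

lemma map_injective (hP : P ≤ P') : Function.Injective (map hP (le_refl Q)) := by
  refine (injective_iff_map_eq_zero _).mpr fun x hx => ?_
  obtain ⟨p, rfl⟩ := Submodule.Quotient.mk_surjective _ x
  exact mk_eq_zero.mpr (mk_eq_zero (x := Submodule.inclusion hP p).mp hx)

lemma map_surjective (hQ : Q ≤ Q') : Function.Surjective (map (le_refl P) hQ) := by
  intro x
  obtain ⟨p, rfl⟩ := Submodule.Quotient.mk_surjective _ x
  exact ⟨Submodule.Quotient.mk p, rfl⟩

lemma exact_map (hP : P ≤ P') (hQ : Q ≤ Q') (hPQ' : P ≤ Q') (h : P' ⊓ Q' ≤ P ⊔ Q) :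
    Function.Exact (map hP (le_refl Q)) (map (le_refl P') hQ) := by
  intro x
  constructor
  · obtain ⟨p', rfl⟩ := Submodule.Quotient.mk_surjective _ x
    intro hp'
    obtain ⟨p, hp, q, hq, hpq⟩ := Submodule.mem_sup.mp (h ⟨p'.2, mk_eq_zero.mp hp'⟩)
    refine ⟨Submodule.Quotient.mk ⟨p, hp⟩, (Submodule.Quotient.eq _).mpr ?_⟩
    change p - p' ∈ Q
    rw [← hpq, sub_add_cancel_left]
    exact neg_mem hq
  · rintro ⟨y, rfl⟩
    obtain ⟨p, rfl⟩ := Submodule.Quotient.mk_surjective _ y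
    exact mk_eq_zero (x := Submodule.inclusion hP p).mpr (hPQ' p.2)

lemma bijective_smul {r : S} (hr : Function.Surjective fun x : L => r • x)
    (hP : ∀ x : L, r • x ∈ P → x ∈ P) (hQ : ∀ x : L, r • x ∈ Q → x ∈ Q) :
    Function.Bijective fun x : Subquotient P Q => r • x := by
  refine ⟨(injective_iff_map_eq_zero (LinearMap.lsmul S (Subquotient P Q) r)).mpr fun x hx => ?_,
    fun x => ?_⟩
  · obtain ⟨p, rfl⟩ := Submodule.Quotient.mk_surjective _ x
    exact mk_eq_zero.mpr (hQ p (mk_eq_zero (x := r • p).mp hx))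
  · obtain ⟨⟨p, hp⟩, rfl⟩ := Submodule.Quotient.mk_surjective _ x
    obtain ⟨y, rfl⟩ := hr p
    exact ⟨Submodule.Quotient.mk ⟨y, hP y hp⟩, rfl⟩

/-- The sequence `P / (P ∩ Q) → P' / (P' ∩ Q) → P' / (P' ∩ Q')`. -/
def shortComplex (hP : P ≤ P') (hQ : Q ≤ Q') (hPQ' : P ≤ Q') (h : P' ⊓ Q' ≤ P ⊔ Q) :
    ShortComplex (ModuleCat.{v} S) :=
  .mk (ModuleCat.ofHom (map hP (le_refl Q))) (ModuleCat.ofHom (map (le_refl P') hQ)) <|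
    ModuleCat.hom_ext (exact_map hP hQ hPQ' h).linearMap_comp_eq_zero

lemma shortComplex_shortExact (hP : P ≤ P') (hQ : Q ≤ Q') (hPQ' : P ≤ Q')
    (h : P' ⊓ Q' ≤ P ⊔ Q) : (shortComplex hP hQ hPQ' h).ShortExact where
  exact := (ShortComplex.ShortExact.moduleCat_exact_iff_function_exact _).mpr <|
    exact_map hP hQ hPQ' h
  mono_f := (ModuleCat.mono_iff_injective _).mpr (map_injective hP)
  epi_g := (ModuleCat.epi_iff_surjective _).mpr (map_surjective hQ)

end Subquotient

end Subquotient

section LaurentSeries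

universe v u

/-- Laurent series over `A` in the variables `x i`, `i : σ`. For finite `σ`, a subset of `σ → ℤ` is
partially well-ordered exactly when it is bounded below, so these are the series with poles of
bounded order, i.e. the localization of the power series ring at the product of the variables. -/
abbrev MvLaurentSeries (σ : Type u) (A : Type v) [Zero A] : Type (max u v) := HahnSeries (σ → ℤ) A

namespace MvLaurentSeries

variable {σ : Type u} {A : Type v} [CommRing A]

/-- The exponent of a monomial, viewed as an exponent of a Laurent monomial. -/
noncomputable def laurentExponent : (σ →₀ ℕ) →+ (σ → ℤ) :=
  ((Nat.castAddMonoidHom ℤ).compLeft σ).comp Finsupp.coeFnAddHom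

lemma laurentExponent_apply (m : σ →₀ ℕ) (i : σ) : laurentExponent m i = m i := rfl

lemma laurentExponent_le_iff (m m' : σ →₀ ℕ) :
    laurentExponent m ≤ laurentExponent m' ↔ m ≤ m' := by
  simp only [Pi.le_def, Finsupp.le_def, laurentExponent_apply, Nat.cast_le]

lemma laurentExponent_injective : Function.Injective (laurentExponent (σ := σ)) := fun m m' h =>
  le_antisymm ((laurentExponent_le_iff m m').mp h.le) ((laurentExponent_le_iff m' m).mp h.ge)

lemma laurentExponent_nonneg (m : σ →₀ ℕ) : 0 ≤ laurentExponent m :=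
  fun i => Int.natCast_nonneg (m i)

lemma laurentExponent_single (i : σ) (t : ℕ) [DecidableEq σ] :
    laurentExponent (Finsupp.single i t) = Pi.single i (t : ℤ) := by
  ext j
  rw [laurentExponent_apply, Finsupp.single_apply, Pi.single_apply]
  aesop

variable [Finite σ]

lemma exists_laurentExponent_eq {a : σ → ℤ} (ha : 0 ≤ a) : ∃ m, laurentExponent m = a :=
  ⟨Finsupp.equivFunOnFinite.symm fun i => (a i).toNat, funext fun i => Int.toNat_of_nonneg (ha i)⟩

noncomputable instance : Algebra (MvPowerSeries σ A) (MvLaurentSeries σ A) :=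
  (HahnSeries.embDomainRingHom laurentExponent laurentExponent_injective
      laurentExponent_le_iff).comp
    (HahnSeries.toMvPowerSeries (R := A) (σ := σ)).symm.toRingHom |>.toAlgebra

@[simp]
lemma coeff_algebraMap_laurentExponent (r : MvPowerSeries σ A) (m : σ →₀ ℕ) :
    (algebraMap _ (MvLaurentSeries σ A) r).coeff (laurentExponent m) = MvPowerSeries.coeff m r :=
  HahnSeries.embDomain_coeff
    (f := ⟨⟨laurentExponent, laurentExponent_injective⟩, laurentExponent_le_iff _ _⟩)

lemma coeff_algebraMap_of_not_nonneg (r : MvPowerSeries σ A) {a : σ → ℤ} (ha : ¬ 0 ≤ a) :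
    (algebraMap _ (MvLaurentSeries σ A) r).coeff a = 0 :=
  HahnSeries.embDomain_of_notMem_range
    (f := ⟨⟨laurentExponent, laurentExponent_injective⟩, laurentExponent_le_iff _ _⟩) <| by
      rintro ⟨m, rfl⟩
      exact ha (laurentExponent_nonneg m)

lemma eq_algebraMap_iff {f : MvLaurentSeries σ A} {r : MvPowerSeries σ A} :
    f = algebraMap _ _ r ↔ (∀ a, ¬ 0 ≤ a → f.coeff a = 0) ∧
      ∀ m, f.coeff (laurentExponent m) = MvPowerSeries.coeff m r := by
  constructor
  · rintro rfl
    exact ⟨fun a => coeff_algebraMap_of_not_nonneg r, coeff_algebraMap_laurentExponent r⟩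
  · rintro ⟨h₀, h⟩
    ext a
    by_cases ha : 0 ≤ a
    · obtain ⟨m, rfl⟩ := exists_laurentExponent_eq ha
      rw [h, coeff_algebraMap_laurentExponent]
    · rw [h₀ a ha, coeff_algebraMap_of_not_nonneg r ha]

lemma algebraMap_injective :
    Function.Injective (algebraMap (MvPowerSeries σ A) (MvLaurentSeries σ A)) := fun r s h => by
  ext m
  rw [← coeff_algebraMap_laurentExponent, h, coeff_algebraMap_laurentExponent]

lemma algebraMap_monomial (m : σ →₀ ℕ) (b : A) :
    algebraMap _ (MvLaurentSeries σ A) (MvPowerSeries.monomial m b) =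
      HahnSeries.single (laurentExponent m) b := by
  classical
  refine (eq_algebraMap_iff.mpr ⟨fun a ha => HahnSeries.coeff_single_of_ne ?_, fun m' => ?_⟩).symm
  · rintro rfl
    exact ha (laurentExponent_nonneg m)
  · simp only [HahnSeries.coeff_single, MvPowerSeries.coeff_monomial,
      laurentExponent_injective.eq_iff]

lemma coeff_monomial_smul (m : σ →₀ ℕ) (b : A) (f : MvLaurentSeries σ A) (a : σ → ℤ) :
    (MvPowerSeries.monomial m b • f).coeff a = b * f.coeff (a - laurentExponent m) := by
  rw [Algebra.smul_def, algebraMap_monomial, HahnSeries.coeff_single_mul]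

lemma coeff_X_pow_smul [DecidableEq σ] (i : σ) (t : ℕ) (f : MvLaurentSeries σ A) (a : σ → ℤ) :
    ((MvPowerSeries.X i ^ t : MvPowerSeries σ A) • f).coeff a =
      f.coeff (a - Pi.single i (t : ℤ)) := by
  rw [MvPowerSeries.X_pow_eq, coeff_monomial_smul, one_mul, laurentExponent_single]

lemma surjective_X_pow_smul (i : σ) (t : ℕ) :
    Function.Surjective fun f : MvLaurentSeries σ A =>
      (MvPowerSeries.X i ^ t : MvPowerSeries σ A) • f := by
  classical
  refine fun f => ⟨HahnSeries.single (-Pi.single i (t : ℤ)) 1 * f, ?_⟩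
  ext a
  simp only [coeff_X_pow_smul, HahnSeries.coeff_single_mul, one_mul, sub_neg_eq_add,
    sub_add_cancel]

instance : IsScalarTower A (MvPowerSeries σ A) (MvLaurentSeries σ A) := by
  refine .of_algebraMap_eq fun a => ?_
  rw [MvPowerSeries.algebraMap_apply, ← MvPowerSeries.monomial_zero_eq_C_apply, algebraMap_monomial,
    map_zero]
  rfl

/-- The Laurent series whose exponents lie in the upper set `U`. -/
def supported (U : UpperSet (σ → ℤ)) : Submodule (MvPowerSeries σ A) (MvLaurentSeries σ A) where
  carrier := {f | f.support ⊆ U}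
  add_mem' hf hg := (Function.support_add _ _).trans (Set.union_subset hf hg)
  zero_mem' := by simp
  smul_mem' r f hf := by
    rw [Algebra.smul_def]
    refine HahnSeries.support_mul_subset.trans ?_
    rintro _ ⟨c, hc, a, ha, rfl⟩
    have hc₀ : 0 ≤ c := not_imp_comm.mp (coeff_algebraMap_of_not_nonneg r) hc
    exact U.upper (le_add_of_nonneg_left hc₀) (hf ha)

variable {U V : UpperSet (σ → ℤ)}

lemma mem_supported {f : MvLaurentSeries σ A} : f ∈ supported U ↔ ∀ a ∉ U, f.coeff a = 0 :=
  Function.support_subset_iff'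

lemma supported_mono (h : (U : Set (σ → ℤ)) ⊆ V) : supported (A := A) U ≤ supported V :=
  fun _ hf => hf.trans h

lemma mem_supported_sup_supported {f : MvLaurentSeries σ A}
    (hf : f.support ⊆ (U ∪ V : Set (σ → ℤ))) : f ∈ supported U ⊔ supported V := by
  classical
  let g : MvLaurentSeries σ A :=
    ⟨(U : Set (σ → ℤ)).indicator f.coeff, f.isPWO_support.mono <| by simp [HahnSeries.support]⟩
  have g_coeff (a) : g.coeff a = if a ∈ U then f.coeff a else 0 := Set.indicator_apply ..
  refine Submodule.mem_sup.mpr ⟨g, mem_supported.mpr fun a ha => ?_, f - g,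
    mem_supported.mpr fun a ha => ?_, add_sub_cancel g f⟩
  · rw [g_coeff, if_neg ha]
  · rw [HahnSeries.coeff_sub, g_coeff]
    split_ifs with haU
    · exact sub_self _
    · rw [sub_zero]
      exact Function.support_subset_iff'.mp hf a fun h => h.elim haU ha

lemma mem_supported_of_X_pow_smul_mem {i : σ} {t : ℕ}
    (hU : ∀ a ∈ U, ∀ b, (∀ j ≠ i, a j = b j) → b ∈ U) {f : MvLaurentSeries σ A}
    (hf : (MvPowerSeries.X i ^ t : MvPowerSeries σ A) • f ∈ supported U) :
    f ∈ supported U := by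
  classical
  refine mem_supported.mpr fun a ha => ?_
  have hf' := mem_supported.mp hf (a + Pi.single i (t : ℤ)) fun h =>
    ha (hU _ h a fun j hj => by simp [hj])
  rwa [coeff_X_pow_smul, add_sub_cancel_right] at hf'

end MvLaurentSeries

end LaurentSeries

section PrincipalParts

open CategoryTheory Abelian

universe v u

namespace MvLaurentSeries

variable {σ : Type u} {A : Type v} [CommRing A]

/-- The exponents of Laurent monomials whose poles lie along the divisors `x j = 0`, `j ∈ s`. -/
def polesAlong (s : Finset σ) : UpperSet (σ → ℤ) where
  carrier := {a | ∀ j ∉ s, 0 ≤ a j}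
  upper' _ _ hab ha j hj := (ha j hj).trans (hab j)

/-- The exponents of Laurent monomials which have no pole along `x j = 0` for at least one
`j ∈ s`. -/
def regularAlongSome (s : Finset σ) : UpperSet (σ → ℤ) where
  carrier := {a | ∃ j ∈ s, 0 ≤ a j}
  upper' _ _ hab := fun ⟨j, hj, ha⟩ => ⟨j, hj, ha.trans (hab j)⟩

lemma mem_polesAlong {s : Finset σ} {a : σ → ℤ} : a ∈ polesAlong s ↔ ∀ j ∉ s, 0 ≤ a j := Iff.rfl

lemma mem_regularAlongSome {s : Finset σ} {a : σ → ℤ} :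
    a ∈ regularAlongSome s ↔ ∃ j ∈ s, 0 ≤ a j := Iff.rfl

variable [Finite σ]

variable (A) in
/-- Laurent series with poles along the divisors `x j = 0`, `j ∈ s`, modulo sums of series each
regular along one of these divisors: the top Čech cohomology, hence the top local cohomology, of the
power series ring with respect to the variables `x j`, `j ∈ s`. -/
abbrev PrincipalParts (s : Finset σ) : Type (max u v) :=
  Subquotient (supported (A := A) (polesAlong s)) (supported (regularAlongSome s))

lemma range_algebraMap_eq_supported :
    LinearMap.range (Algebra.linearMap (MvPowerSeries σ A) (MvLaurentSeries σ A)) =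
      supported (polesAlong ∅) := by
  ext f
  simp only [LinearMap.mem_range, Algebra.linearMap_apply, eq_comm (b := f), mem_supported,
    eq_algebraMap_iff, mem_polesAlong, Finset.notMem_empty, not_false_eq_true, true_imp_iff]
  exact ⟨fun ⟨_, h, _⟩ => h, fun h => ⟨fun m => f.coeff (laurentExponent m), h, fun _ => rfl⟩⟩

lemma supported_regularAlongSome_empty :
    supported (A := A) (regularAlongSome (∅ : Finset σ)) = ⊥ := by
  refine (Submodule.eq_bot_iff _).mpr fun f hf => HahnSeries.ext <| funext fun a => ?_
  exact mem_supported.mp hf a (by simp [mem_regularAlongSome])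

variable (σ A) in
/-- Without poles, principal parts are power series. -/
noncomputable def principalPartsEmptyEquiv :
    PrincipalParts A (∅ : Finset σ) ≃ₗ[MvPowerSeries σ A] MvPowerSeries σ A :=
  Submodule.quotEquivOfEqBot _
      (by simp [supported_regularAlongSome_empty, Submodule.submoduleOf]) ≪≫ₗ
    (LinearEquiv.ofEq _ _ range_algebraMap_eq_supported).symm ≪≫ₗ
    (LinearEquiv.ofInjective (Algebra.linearMap _ _) algebraMap_injective).symm

section Sequence

variable [DecidableEq σ] {s : Finset σ} {i : σ}

variable (A) in
/-- For `i ∉ s`, the sequence from the principal parts along `s` to those along `insert i s`. In the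
middle, poles along `x i = 0` are allowed, but regularity along it is not divided out. -/
noncomputable def principalPartsSequence (hi : i ∉ s) :
    ShortComplex (ModuleCat.{max u v} (MvPowerSeries σ A)) :=
  Subquotient.shortComplex
    (P := supported (A := A) (polesAlong s)) (P' := supported (polesAlong (insert i s)))
    (Q := supported (regularAlongSome s)) (Q' := supported (regularAlongSome (insert i s)))
    (supported_mono fun _ ha j hj => ha j (mt Finset.mem_insert_of_mem hj))
    (supported_mono fun _ ⟨j, hj, ha⟩ => ⟨j, Finset.mem_insert_of_mem hj, ha⟩)
    (supported_mono fun _ ha => ⟨i, Finset.mem_insert_self i s, ha i hi⟩)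
    (fun f hf => mem_supported_sup_supported fun a ha => by
      obtain ⟨j, hj, haj⟩ := hf.2 ha
      rcases Finset.mem_insert.mp hj with rfl | hj
      · refine Or.inl fun k hk => ?_
        rcases eq_or_ne k j with rfl | hkj
        · exact haj
        · exact hf.1 ha k fun h => (Finset.mem_insert.mp h).elim hkj hk
      · exact Or.inr ⟨j, hj, haj⟩)

lemma principalPartsSequence_shortExact (hi : i ∉ s) : (principalPartsSequence A hi).ShortExact :=
  Subquotient.shortComplex_shortExact ..

lemma bijective_X_pow_smul (hi : i ∉ s) (t : ℕ) :
    Function.Bijective fun x : (principalPartsSequence A hi).X₂ =>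
      (MvPowerSeries.X i ^ t : MvPowerSeries σ A) • x := by
  refine Subquotient.bijective_smul (surjective_X_pow_smul i t)
    (fun f => mem_supported_of_X_pow_smul_mem ?_) (fun f => mem_supported_of_X_pow_smul_mem ?_)
  · rintro a ha b hab j hj
    rw [← hab j (fun h => hj (h ▸ Finset.mem_insert_self i s))]
    exact ha j hj
  · rintro a ⟨j, hj, ha⟩ b hab
    exact ⟨j, hj, hab j (fun h => hi (h ▸ hj)) ▸ ha⟩

end Sequence

theorem exists_postcompBijective_principalParts (s : Finset σ) :
    ∃ α : Abelian.Ext.{max u v} (ModuleCat.of (MvPowerSeries σ A) (PrincipalParts A s))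
        (ModuleCat.of _ (MvPowerSeries σ A)) s.card,
      ∀ N : ModuleCat.{max u v} (MvPowerSeries σ A),
        (∀ i ∈ s, ∃ t, ∀ x : N, (MvPowerSeries.X i ^ t : MvPowerSeries σ A) • x = 0) →
          PostcompBijective N α := by
  classical
  induction s using Finset.induction with
  | empty => exact ⟨Ext.mk₀ (principalPartsEmptyEquiv σ A).toModuleIso.hom, fun N _ => .mk₀_iso N _⟩
  | insert i s hi ih =>
    obtain ⟨α, hα⟩ := ih
    have hS := principalPartsSequence_shortExact (A := A) hi
    have card_eq : 1 + s.card = (insert i s).card := by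
      rw [Finset.card_insert_of_notMem hi, add_comm]
    refine ⟨hS.extClass.comp α card_eq, fun N hN => ?_⟩
    obtain ⟨t, ht⟩ := hN i (Finset.mem_insert_self i s)
    have X_pow_invertible : IsIso ((MvPowerSeries.X i ^ t : MvPowerSeries σ A) •
        𝟙 (principalPartsSequence A hi).X₂) :=
      (ConcreteCategory.isIso_iff_bijective _).mpr (bijective_X_pow_smul hi t)
    have X_pow_eq_zero : (MvPowerSeries.X i ^ t : MvPowerSeries σ A) • 𝟙 N = 0 :=
      ModuleCat.hom_ext (LinearMap.ext ht)
    have subsingleton_ext :=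
      subsingleton_ext_of_smul_id_eq_zero (X := N) (Y := (principalPartsSequence A hi).X₂)
        (MvPowerSeries.X i ^ t : MvPowerSeries σ A) X_pow_eq_zero
    exact (PostcompBijective.extClass N hS subsingleton_ext).comp
      (hα N fun j hj => hN j (Finset.mem_insert_of_mem hj)) card_eq

end MvLaurentSeries

end PrincipalParts

section Residue

universe v u

variable {σ : Type u} {A : Type v} [CommRing A] {I : Ideal (MvPowerSeries σ A)}

lemma mem_pow_of_coeff_eq_zero (hI : I = Ideal.span (Set.range MvPowerSeries.X)) {t : ℕ}
    (s : Finset σ) {r : MvPowerSeries σ A}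
    (h : ∀ m : σ →₀ ℕ, (∀ i ∈ s, m i < t) → MvPowerSeries.coeff m r = 0) : r ∈ I ^ t := by
  classical
  induction s using Finset.induction_on generalizing r with
  | empty =>
    have r_eq_zero : r = 0 := MvPowerSeries.ext fun m => h m (by simp)
    exact r_eq_zero ▸ zero_mem _
  | insert i s _ ih =>
    let p : MvPowerSeries σ A := fun m => if m i < t then 0 else MvPowerSeries.coeff m r
    have coeff_p (m) : MvPowerSeries.coeff m p =
      if m i < t then 0 else MvPowerSeries.coeff m r := rfl
    have p_mem : p ∈ I ^ t := by
      have X_mem : MvPowerSeries.X i ∈ I := hI ▸ Ideal.subset_span (Set.mem_range_self i)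
      refine Ideal.mem_of_dvd _ ?_ (Ideal.pow_mem_pow X_mem t)
      exact MvPowerSeries.X_pow_dvd_iff.mpr fun m hm => if_pos hm
    refine (Submodule.sub_mem_iff_left _ p_mem).mp (ih fun m hm => ?_)
    rw [map_sub, coeff_p]
    split_ifs with hmi
    · rw [sub_zero]
      exact h m (Finset.forall_mem_insert _ _ _ |>.mpr ⟨hmi, hm⟩)
    · exact sub_self _

namespace ContinuousDual

variable [Finite σ] {φ : ContinuousDual A (MvPowerSeries σ A) I (MvPowerSeries σ A)}

lemma exists_apply_eq_zero_of_coeff_eq_zero (hI : I = Ideal.span (Set.range MvPowerSeries.X))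
    (φ : ContinuousDual A (MvPowerSeries σ A) I (MvPowerSeries σ A)) :
    ∃ b : σ →₀ ℕ, ∀ r : MvPowerSeries σ A,
      (∀ m ≤ b, MvPowerSeries.coeff m r = 0) → (φ : MvPowerSeries σ A →ₗ[A] A) r = 0 := by
  cases nonempty_fintype σ
  obtain ⟨t, ht⟩ := φ.2
  refine ⟨Finsupp.equivFunOnFinite.symm fun _ => t, fun r hr => ?_⟩
  have r_mem : r ∈ I ^ t := mem_pow_of_coeff_eq_zero hI Finset.univ fun m hm =>
    hr m fun i => (hm i (Finset.mem_univ i)).le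
  simpa using ht r r_mem 1

lemma eq_zero_of_monomial (hI : I = Ideal.span (Set.range MvPowerSeries.X))
    (h : ∀ m, (φ : MvPowerSeries σ A →ₗ[A] A) (MvPowerSeries.monomial m 1) = 0) : φ = 0 := by
  classical
  have polynomial (p : MvPolynomial σ A) : (φ : MvPowerSeries σ A →ₗ[A] A) p = 0 := by
    have : (φ : MvPowerSeries σ A →ₗ[A] A) ∘ₗ
        (MvPolynomial.coeToMvPowerSeries.algHom A).toLinearMap = 0 :=
      MvPolynomial.linearMap_ext fun m => LinearMap.ext_ring (by simpa using h m)
    simpa using LinearMap.congr_fun this p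
  obtain ⟨b, hb⟩ := exists_apply_eq_zero_of_coeff_eq_zero hI φ
  ext r
  have hr := hb (r - MvPowerSeries.trunc' A b r) fun m hm => by
    simp [MvPowerSeries.coeff_trunc', hm]
  rwa [map_sub, polynomial, sub_zero] at hr

end ContinuousDual

namespace MvLaurentSeries

lemma exists_le_of_coeff_ne_zero (f : MvLaurentSeries σ A) (i : σ) :
    ∃ z : ℤ, ∀ a, f.coeff a ≠ 0 → z ≤ a i := by
  have isWF := (f.isPWO_support.image_of_monotone (Function.monotone_eval i)).isWF
  obtain hempty | hne := ((Function.eval i) '' f.support).eq_empty_or_nonempty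
  · exact ⟨0, fun a ha => (hempty.subset (Set.mem_image_of_mem _ ha)).elim⟩
  · exact ⟨isWF.min hne, fun a ha => isWF.min_le hne (Set.mem_image_of_mem _ ha)⟩

variable [Fintype σ]

lemma exists_smul_mem_supported_of_mem_pow (hI : I = Ideal.span (Set.range MvPowerSeries.X))
    (f : MvLaurentSeries σ A) :
    ∃ t, ∀ r ∈ I ^ t, r • f ∈ supported (regularAlongSome Finset.univ) := by
  classical
  let J : Ideal (MvPowerSeries σ A) := (supported (regularAlongSome Finset.univ)).comap
    (LinearMap.toSpanSingleton (MvPowerSeries σ A) (MvLaurentSeries σ A) f)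
  have I_le : I ≤ J.radical := by
    rw [hI, Ideal.span_le]
    rintro _ ⟨i, rfl⟩
    obtain ⟨z, hz⟩ := exists_le_of_coeff_ne_zero f i
    refine ⟨(-z).toNat, mem_supported.mpr fun a ha => ?_⟩
    rw [LinearMap.toSpanSingleton_apply, coeff_X_pow_smul]
    by_contra hne
    have hza := hz _ hne
    rw [Pi.sub_apply, Pi.single_eq_same] at hza
    exact ha ⟨i, Finset.mem_univ i, by lia⟩
  have I_fg : I.FG := hI ▸ Submodule.fg_span (Set.finite_range _)
  exact Ideal.exists_pow_le_of_le_radical_of_fg I_le I_fg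

lemma notMem_regularAlongSome_univ {a : σ → ℤ} :
    a ∉ regularAlongSome Finset.univ ↔ ∃ m, -1 - laurentExponent m = a := by
  constructor
  · intro ha
    have a_neg (i) : a i < 0 := not_le.mp fun h => ha ⟨i, Finset.mem_univ i, h⟩
    obtain ⟨m, hm⟩ := exists_laurentExponent_eq (a := -1 - a) fun i =>
      Int.sub_nonneg_of_le (Int.le_sub_one_of_lt (a_neg i))
    exact ⟨m, hm ▸ sub_sub_cancel _ _⟩
  · rintro ⟨m, rfl⟩ ⟨i, -, hi⟩
    simp only [Pi.sub_apply, Pi.neg_apply, Pi.one_apply, laurentExponent_apply] at hi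
    lia

variable (σ A) in
/-- The residue of a Laurent series: the coefficient of `∏ i, (x i)⁻¹`. -/
noncomputable def residue : MvLaurentSeries σ A →ₗ[A] A := HahnSeries.coeff.linearMap (-1)

/-- The residue pairing `f ↦ (r ↦ res (r f))`. -/
noncomputable def residuePairing (hI : I = Ideal.span (Set.range MvPowerSeries.X)) :
    MvLaurentSeries σ A →ₗ[MvPowerSeries σ A]
      ContinuousDual A (MvPowerSeries σ A) I (MvPowerSeries σ A) where
  toFun f := ⟨residue σ A ∘ₗ (LinearMap.toSpanSingleton (MvPowerSeries σ A) _ f).restrictScalars A,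
    by
      obtain ⟨t, ht⟩ := exists_smul_mem_supported_of_mem_pow hI f
      refine ⟨t, fun r hr m => ?_⟩
      exact mem_supported.mp (ht _ (Ideal.mul_mem_right m _ hr)) (-1) <|
        notMem_regularAlongSome_univ.mpr ⟨0, by simp⟩⟩
  map_add' f g := by
    ext r
    exact (congrArg (residue σ A) (smul_add r f g)).trans (map_add _ _ _)
  map_smul' s f := by
    ext r
    exact congrArg (residue σ A) ((smul_comm r s f).trans (smul_assoc s r f).symm)

variable (hI : I = Ideal.span (Set.range MvPowerSeries.X))

lemma residuePairing_monomial (f : MvLaurentSeries σ A) (m : σ →₀ ℕ) :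
    (residuePairing hI f : MvPowerSeries σ A →ₗ[A] A) (MvPowerSeries.monomial m 1) =
      f.coeff (-1 - laurentExponent m) :=
  (coeff_monomial_smul m 1 f (-1)).trans (one_mul _)

lemma ker_residuePairing :
    LinearMap.ker (residuePairing hI) = supported (regularAlongSome Finset.univ) := by
  ext f
  have mem_supported_iff : f ∈ supported (regularAlongSome Finset.univ) ↔
      ∀ m, f.coeff (-1 - laurentExponent m) = 0 := by
    simp only [mem_supported, notMem_regularAlongSome_univ, forall_exists_index,
      forall_apply_eq_imp_iff]
  rw [LinearMap.mem_ker, mem_supported_iff]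
  refine ⟨fun h m => ?_, fun h => ContinuousDual.eq_zero_of_monomial hI fun m => ?_⟩
  · rw [← residuePairing_monomial hI, h]
    rfl
  · rw [residuePairing_monomial, h]

lemma residuePairing_surjective : Function.Surjective (residuePairing (A := A) hI) := by
  classical
  intro φ
  obtain ⟨b, hb⟩ := ContinuousDual.exists_apply_eq_zero_of_coeff_eq_zero hI φ
  let f : MvLaurentSeries σ A := ∑ m ∈ Finset.Iic b,
    HahnSeries.single (-1 - laurentExponent m)
      ((φ : MvPowerSeries σ A →ₗ[A] A) (MvPowerSeries.monomial m 1))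
  refine ⟨f, sub_eq_zero.mp (ContinuousDual.eq_zero_of_monomial hI fun m => sub_eq_zero.mpr ?_)⟩
  rw [residuePairing_monomial]
  simp only [f, HahnSeries.coeff_sum, HahnSeries.coeff_single, sub_right_inj,
    laurentExponent_injective.eq_iff, Finset.sum_ite_eq, Finset.mem_Iic]
  split_ifs with hm
  · rfl
  · refine (hb _ fun m' hle => MvPowerSeries.coeff_monomial_ne ?_ 1).symm
    rintro rfl
    exact hm hle

/-- Principal parts form the continuous dual of the power series ring, by the residue pairing. -/
noncomputable def principalPartsEquiv :
    PrincipalParts A (Finset.univ : Finset σ) ≃ₗ[MvPowerSeries σ A]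
      ContinuousDual A (MvPowerSeries σ A) I (MvPowerSeries σ A) :=
  -- The negation coming from the `R`-action is the one `quotKerEquivOfSurjective` can unify with.
  letI : AddCommGroup (ContinuousDual A (MvPowerSeries σ A) I (MvPowerSeries σ A)) :=
    Module.addCommMonoidToAddCommGroup (MvPowerSeries σ A)
  Submodule.quotEquivOfEq _ _
      (by rw [LinearMap.ker_domRestrict, ker_residuePairing, Submodule.submoduleOf]) ≪≫ₗ
    ((residuePairing hI).domRestrict (supported (polesAlong Finset.univ))).quotKerEquivOfSurjective
      fun φ => by
        obtain ⟨f, hf⟩ := residuePairing_surjective hI φ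
        exact ⟨⟨f, fun _ _ i hi => (hi (Finset.mem_univ i)).elim⟩, hf⟩

end MvLaurentSeries

end Residue

section General

universe v u

open MvLaurentSeries

theorem stmt10_general {σ : Type u} [Fintype σ] {A : Type v} [CommRing A]
    {I : Ideal (MvPowerSeries σ A)} (hI : I = Ideal.span (Set.range MvPowerSeries.X))
    {n : ℕ} (hn : Fintype.card σ = n) :
    Nonempty ((localCohomology I n).obj
        (ModuleCat.of (MvPowerSeries σ A) (MvPowerSeries σ A)) ≃ₗ[MvPowerSeries σ A]
      ContinuousDual A (MvPowerSeries σ A) I (MvPowerSeries σ A)) := by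
  subst hn
  obtain ⟨α, hα⟩ := exists_postcompBijective_principalParts (A := A) (Finset.univ : Finset σ)
  have quotient_torsion (t : ℕ) (i : σ) (x : MvPowerSeries σ A ⧸ I ^ t) :
      (MvPowerSeries.X i ^ t : MvPowerSeries σ A) • x = 0 := by
    have X_mem : MvPowerSeries.X i ∈ I := hI ▸ Ideal.subset_span (Set.mem_range_self i)
    obtain ⟨r, rfl⟩ := Submodule.Quotient.mk_surjective _ x
    exact (Submodule.Quotient.mk_eq_zero _).mpr
      (Ideal.mul_mem_right r _ (Ideal.pow_mem_pow X_mem t))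
  have principalParts_torsion (x : PrincipalParts A (Finset.univ : Finset σ)) :
      ∃ t, ∀ r ∈ I ^ t, r • x = 0 := by
    obtain ⟨f, rfl⟩ := Submodule.Quotient.mk_surjective _ x
    obtain ⟨t, ht⟩ := exists_smul_mem_supported_of_mem_pow hI f.1
    exact ⟨t, fun r hr => Subquotient.mk_eq_zero (x := r • f).mpr (ht r hr)⟩
  obtain ⟨e⟩ := nonempty_localCohomology_linearEquiv
    (fun t => hα _ fun i _ => ⟨t, quotient_torsion t i⟩) principalParts_torsion
  exact ⟨e.trans (principalPartsEquiv hI)⟩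

end General

/-- **Top local cohomology of a power series ring as a continuous dual.**
For `R = A[[x₁,…,xₙ]]` and `I = (x₁,…,xₙ)` there is an `R`-module isomorphism
`Hⁿ_I(R) ≅ Hom_A^cts(R, A)`. -/
theorem stmt10 (A : Type) [CommRing A] [IsNoetherianRing A] (n : ℕ)
    (I : Ideal (MvPowerSeries (Fin n) A))
    (hI : I = Ideal.span (Set.range (MvPowerSeries.X : Fin n → MvPowerSeries (Fin n) A))) :
    Nonempty
      (((localCohomology I n).obj
          (ModuleCat.of (MvPowerSeries (Fin n) A) (MvPowerSeries (Fin n) A))) ≃ₗ[MvPowerSeries (Fin n) A]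
        ContinuousDual A (MvPowerSeries (Fin n) A) I (MvPowerSeries (Fin n) A)) := by
  exact stmt10_general hI (Fintype.card_fin n)
end

section
/- Let A be a commutative Noetherian ring, let R = A[[x_1, ..., x_n]] be the power series ring over A, and let I = (x_1, ..., x_n) ⊆ R. Then H^i_I(R) = 0 for every i ≠ n. -/
/-!
The variables form a weakly regular sequence `rs` of length `n` generating `I`. For `i < n`, since
`I` acts nilpotently on `R / I ^ t`, Rees' argument gives `Ext^i(R / I ^ t, R) = 0`. Replacing
each `r` in `rs` by `r ^ t` gives again a weakly regular sequence; it generates an ideal `J`, and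
the ideals `J` are cofinal with the powers of `I`. As `R / J` has projective dimension at most `n`,
`Ext^i(R / J, R) = 0` for `i > n`. Local cohomology is the colimit of `Ext^i(R / I ^ t, R)`,
whose transition maps factor through the vanishing groups.
-/

open CategoryTheory Limits Opposite RingTheory.Sequence
open scoped Pointwise

universe w v u

section WeaklyRegular

variable {R : Type*} [CommRing R] {M M₁ M₂ M₃ : Type*} [AddCommGroup M] [Module R M]
  [AddCommGroup M₁] [Module R M₁] [AddCommGroup M₂] [Module R M₂] [AddCommGroup M₃] [Module R M₃]

lemma quotSMulTop_map_injective {r : R} {f : M₁ →ₗ[R] M₂} {g : M₂ →ₗ[R] M₃}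
    (hf : Function.Injective f) (hfg : Function.Exact f g) (hr : IsSMulRegular M₃ r) :
    Function.Injective (QuotSMulTop.map r f) := by
  have h_zero : Function.Exact (0 : M₁ →ₗ[R] M₁) f := (f.exact_zero_iff_injective M₁).mpr hf
  have h_map :=
    QuotSMulTop.map_first_exact_on_four_term_exact_of_isSMulRegular_last h_zero hfg hr
  rw [map_zero] at h_map
  exact (LinearMap.exact_zero_iff_injective _ _).mp h_map

lemma isWeaklyRegular_of_exact {rs : List R} {f : M₁ →ₗ[R] M₂} {g : M₂ →ₗ[R] M₃}
    (hf : Function.Injective f) (hfg : Function.Exact f g) (hg : Function.Surjective g)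
    (h₁ : IsWeaklyRegular M₁ rs) (h₃ : IsWeaklyRegular M₃ rs) : IsWeaklyRegular M₂ rs := by
  induction rs generalizing M₁ M₂ M₃ with
  | nil => exact .nil R M₂
  | cons r rs ih =>
    rw [isWeaklyRegular_cons_iff] at h₁ h₃
    exact .cons (isSMulRegular_of_range_eq_ker hf hfg.linearMap_ker_eq.symm h₁.1 h₃.1)
      (ih (quotSMulTop_map_injective hf hfg h₃.1) (QuotSMulTop.map_exact r hfg hg)
        (QuotSMulTop.map_surjective r hg) h₁.2 h₃.2)

lemma isWeaklyRegular_of_subsingleton [Subsingleton M] (rs : List R) : IsWeaklyRegular M rs :=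
  ⟨fun _ _ ↦ Function.injective_of_subsingleton _⟩

lemma smul_top_le_comap_lsmul (a b : R) :
    a • (⊤ : Submodule R M) ≤ ((a * b) • (⊤ : Submodule R M)).comap (LinearMap.lsmul R M b) := by
  rintro _ ⟨x, -, rfl⟩
  exact ⟨x, trivial, by simp [mul_smul, smul_comm a b x]⟩

lemma mul_smul_top_le (a b : R) : (a * b) • (⊤ : Submodule R M) ≤ b • ⊤ := by
  rintro _ ⟨x, -, rfl⟩
  exact ⟨a • x, trivial, by simp [mul_smul, smul_comm a b x]⟩

lemma mapQ_lsmul_injective {b : R} (hb : IsSMulRegular M b) (a : R) :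
    Function.Injective (Submodule.mapQ _ _ (LinearMap.lsmul R M b)
      (smul_top_le_comap_lsmul a b)) := by
  rw [injective_iff_map_eq_zero]
  intro x hx
  obtain ⟨x, rfl⟩ := Submodule.Quotient.mk_surjective _ x
  obtain ⟨y, -, hy⟩ := (Submodule.Quotient.mk_eq_zero _).mp hx
  refine (Submodule.Quotient.mk_eq_zero _).mpr ⟨y, trivial, hb ?_⟩
  simpa [mul_comm a b, mul_smul] using hy

lemma exact_mapQ_lsmul_factor (a b : R) :
    Function.Exact (Submodule.mapQ _ _ (LinearMap.lsmul R M b) (smul_top_le_comap_lsmul a b))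
      (Submodule.factor (mul_smul_top_le a b)) := by
  rw [LinearMap.exact_iff, Submodule.factor, Submodule.ker_mapQ, Submodule.range_mapQ,
    LinearMap.range_eq_map]
  rfl

-- Extend along `0 → M / a M → M / a b M → M / b M → 0`, whose first map is multiplication by `b`.
lemma isWeaklyRegular_quotSMulTop_mul {a b : R} {rs : List R} (hb : IsSMulRegular M b)
    (ha_rs : IsWeaklyRegular (QuotSMulTop a M) rs) (hb_rs : IsWeaklyRegular (QuotSMulTop b M) rs) :
    IsWeaklyRegular (QuotSMulTop (a * b) M) rs :=
  isWeaklyRegular_of_exact (mapQ_lsmul_injective hb a) (exact_mapQ_lsmul_factor a b)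
    (Submodule.factor_surjective _) ha_rs hb_rs

lemma isWeaklyRegular_quotSMulTop_pow {r : R} {rs : List R} (hr : IsSMulRegular M r)
    (hrs : IsWeaklyRegular (QuotSMulTop r M) rs) (t : ℕ) :
    IsWeaklyRegular (QuotSMulTop (r ^ t) M) rs := by
  induction t with
  | zero =>
    have : Subsingleton (QuotSMulTop (r ^ 0) M) :=
      Submodule.Quotient.subsingleton_iff.mpr (by simp)
    exact isWeaklyRegular_of_subsingleton rs
  | succ t ih => exact pow_succ r t ▸ isWeaklyRegular_quotSMulTop_mul hr ih hrs

lemma isWeaklyRegular_map_pow {rs : List R} (h : IsWeaklyRegular M rs) (t : ℕ) :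
    IsWeaklyRegular M (rs.map (· ^ t)) := by
  induction h with
  | nil => exact .nil R _
  | cons r rs hr _ ih => exact .cons (hr.pow t) (isWeaklyRegular_quotSMulTop_pow hr ih t)

end WeaklyRegular

section Ext

lemma isZero_ext_of_subsingleton {R : Type*} [Ring R] {C : Type*} [Category* C] [Abelian C]
    [Linear R C] [EnoughProjectives C] [HasExt.{w} C] (X Y : C) (i : ℕ)
    [Subsingleton (Abelian.Ext X Y i)] : IsZero (((Ext R C i).obj (op X)).obj Y) := by
  let P := projectiveResolution X
  refine IsZero.of_iso ?_ (P.isoExt i Y)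
  rw [← HomologicalComplex.exactAt_iff_isZero_homology]
  cases i with
  | zero =>
    rw [HomologicalComplex.exactAt_iff' _ 0 0 1 (by simp) (by simp),
      ShortComplex.moduleCat_exact_iff]
    intro (f : P.complex.X 0 ⟶ Y) (hf : P.complex.d 1 0 ≫ f = 0)
    have h_desc : P.exact₀.desc f hf = 0 :=
      (Abelian.Ext.mk₀_bijective X Y).injective (Subsingleton.elim _ _)
    have hf_zero : f = 0 := by rw [← P.exact₀.g_desc f hf, h_desc, comp_zero]
    exact ⟨0, (map_zero _).trans hf_zero.symm⟩
  | succ i =>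
    rw [HomologicalComplex.exactAt_iff' _ i (i + 1) (i + 2) (by simp) (by simp),
      ShortComplex.moduleCat_exact_iff]
    intro (f : P.complex.X (i + 1) ⟶ Y) (hf : P.complex.d (i + 2) (i + 1) ≫ f = 0)
    exact (P.extMk_eq_zero_iff f (i + 2) rfl hf i rfl).1 (Subsingleton.elim _ _)

variable {R : Type u} [CommRing R]

lemma hasProjectiveDimensionLT_quotient_of_isWeaklyRegular {M : ModuleCat.{v} R} {rs : List R}
    {n : ℕ} (hM : HasProjectiveDimensionLT M n) (hrs : IsWeaklyRegular M rs) :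
    HasProjectiveDimensionLT (ModuleCat.of R (M ⧸ Ideal.ofList rs • (⊤ : Submodule R M)))
      (n + rs.length) := by
  induction rs generalizing M n with
  | nil =>
    have e : M ≃ₗ[R] M ⧸ Ideal.ofList ([] : List R) • (⊤ : Submodule R M) :=
      (Submodule.quotEquivOfEqBot _ (by simp)).symm
    exact hasProjectiveDimensionLT_of_iso e.toModuleIso n
  | cons r rs ih =>
    rw [isWeaklyRegular_cons_iff] at hrs
    have h_quot : HasProjectiveDimensionLT (ModuleCat.of R (QuotSMulTop r M)) (n + 1) :=
      hrs.1.smulShortComplex_shortExact.hasProjectiveDimensionLT_X₃ n hM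
        (hasProjectiveDimensionLT_of_ge M n (n + 1) n.le_succ)
    have := ih h_quot hrs.2
    have e := (Submodule.quotOfListConsSMulTopEquivQuotSMulTopInner M r rs).symm
    rw [List.length_cons, ← add_assoc, add_right_comm]
    exact hasProjectiveDimensionLT_of_iso e.toModuleIso _

lemma hasProjectiveDimensionLT_quotient_ofList {rs : List R} (hrs : IsWeaklyRegular R rs) :
    HasProjectiveDimensionLT (ModuleCat.of R (R ⧸ Ideal.ofList rs)) (rs.length + 1) := by
  have h := hasProjectiveDimensionLT_quotient_of_isWeaklyRegular (M := ModuleCat.of R R)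
    (n := 1) inferInstance hrs
  rw [smul_eq_mul, Ideal.mul_top] at h
  rwa [add_comm]

variable [Small.{v} R]

lemma subsingleton_ext_of_isSMulRegular {N M : ModuleCat.{v} R} {r : R} {i : ℕ}
    (hr : IsSMulRegular M r) (hN : r ∈ (Module.annihilator R N).radical)
    (h : ∀ j, j + 1 = i → Subsingleton (Abelian.Ext N (ModuleCat.of R (QuotSMulTop r M)) j)) :
    Subsingleton (Abelian.Ext N M i) := by
  have h_inj : IsSMulRegular (Abelian.Ext N M i) r := by
    refine .of_right_eq_zero_of_smul fun x hx ↦ ?_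
    rw [Abelian.Ext.smul_eq_comp_mk₀] at hx
    have hS := hr.smulShortComplex_shortExact
    cases i with
    | zero =>
      have := hS.mono_f
      exact Abelian.Ext.postcomp_mk₀_injective_of_mono N (M.smulShortComplex r).f
        (hx.trans (map_zero _).symm)
    | succ j =>
      obtain ⟨y, rfl⟩ := Abelian.Ext.covariant_sequence_exact₁ N hS x hx rfl
      obtain rfl : y = 0 := (h j rfl).elim y 0
      exact Abelian.Ext.zero_comp N j hS.extClass (j + 1) rfl
  obtain ⟨k, hk⟩ := hN
  have h_zero (x : Abelian.Ext N M i) : r ^ k • x = 0 := by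
    have h_postcomp :=
      Abelian.Ext.postcomp_smul_id_eq_zero_of_mem_annihilator (M := M) hk i
    rw [Abelian.Ext.smul_eq_comp_mk₀]
    exact congrArg (fun φ ↦ φ.hom x) h_postcomp
  exact subsingleton_of_forall_eq 0 fun x ↦ (h_inj.pow k).right_eq_zero_of_smul (h_zero x)

lemma subsingleton_ext_of_isWeaklyRegular {N M : ModuleCat.{v} R} {rs : List R}
    (hrs : IsWeaklyRegular M rs) (hN : ∀ r ∈ rs, r ∈ (Module.annihilator R N).radical)
    {i : ℕ} (hi : i < rs.length) : Subsingleton (Abelian.Ext N M i) := by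
  induction rs generalizing M i with
  | nil => simp at hi
  | cons r rs ih =>
    rw [isWeaklyRegular_cons_iff] at hrs
    rw [List.forall_mem_cons] at hN
    refine subsingleton_ext_of_isSMulRegular hrs.1 hN.1 fun j hj ↦ ih hrs.2 hN.2 ?_
    rw [List.length_cons] at hi
    lia

end Ext

section LocalCohomology

lemma isZero_pt_of_isColimit {J C : Type*} [Category* J] [Category* C] [HasZeroMorphisms C]
    {F : J ⥤ C} {c : Cocone F} (hc : IsColimit c)
    (h : ∀ j, ∃ (k : J) (φ : j ⟶ k), F.map φ = 0) : IsZero c.pt := by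
  refine (IsZero.iff_id_eq_zero _).mpr (hc.hom_ext fun j ↦ ?_)
  obtain ⟨k, φ, hφ⟩ := h j
  have h_ι : c.ι.app j = 0 := by rw [← c.w φ, hφ, zero_comp]
  rw [h_ι, zero_comp, zero_comp]

variable {R : Type u} [CommRing R]

lemma ext_map_factor_eq_zero {I J K : Ideal R} (hIJ : I ≤ J) (hJK : J ≤ K) (M : ModuleCat.{u} R)
    (i : ℕ) (h : IsZero (((Ext R (ModuleCat.{u} R) i).obj (op (.of R (R ⧸ J)))).obj M)) :
    ((Ext R (ModuleCat.{u} R) i).map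
      (ModuleCat.ofHom (Submodule.factor (hIJ.trans hJK))).op).app M = 0 := by
  rw [← Submodule.factor_comp hIJ hJK, ModuleCat.ofHom_comp, op_comp, Functor.map_comp,
    NatTrans.comp_app]
  exact (congrArg (· ≫ _) (h.eq_zero_of_tgt _)).trans zero_comp

lemma isZero_localCohomology_of_isZero_ext (I : Ideal R) (M : ModuleCat.{u} R) (i : ℕ)
    (h : ∀ t : ℕ, ∃ J : Ideal R, J ≤ I ^ t ∧ (∃ s, I ^ s ≤ J) ∧
      IsZero (((Ext R (ModuleCat.{u} R) i).obj (op (.of R (R ⧸ J)))).obj M)) :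
    IsZero ((localCohomology I i).obj M) := by
  let F := localCohomology.diagram (localCohomology.idealPowersDiagram I) i
  have : HasColimit F := localCohomology.hasColimitDiagram _ _
  have hF : IsColimit _ := isColimitOfPreserves
    ((evaluation (ModuleCat.{u} R) (ModuleCat.{u} R)).obj M) (colimit.isColimit F)
  refine isZero_pt_of_isColimit hF fun t ↦ ?_
  obtain ⟨J, hJt, ⟨s, hsJ⟩, hJ⟩ := h t.unop.unop
  have hsJ' : I ^ max s t.unop.unop ≤ J := (Ideal.pow_le_pow_right (le_max_left _ _)).trans hsJ
  exact ⟨op (op (max s t.unop.unop)), (homOfLE (le_max_right _ _)).op.op,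
    ext_map_factor_eq_zero hsJ' hJt M i hJ⟩

lemma isZero_localCohomology_of_lt_length {M : ModuleCat.{u} R} {rs : List R}
    (hrs : IsWeaklyRegular M rs) {i : ℕ} (hi : i < rs.length) :
    IsZero ((localCohomology (Ideal.ofList rs) i).obj M) := by
  refine isZero_localCohomology_of_isZero_ext _ M i
    fun t ↦ ⟨Ideal.ofList rs ^ t, le_rfl, ⟨t, le_rfl⟩, ?_⟩
  have h_rad (r : R) (hr : r ∈ rs) :
      r ∈ (Module.annihilator R (R ⧸ Ideal.ofList rs ^ t)).radical := by
    rw [Ideal.annihilator_quotient]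
    exact ⟨t, Ideal.pow_mem_pow (Ideal.subset_span (s := {r | r ∈ rs}) hr) t⟩
  have := subsingleton_ext_of_isWeaklyRegular
    (N := ModuleCat.of R (R ⧸ Ideal.ofList rs ^ t)) hrs h_rad hi
  exact isZero_ext_of_subsingleton _ M i

lemma ofList_map_pow_le (rs : List R) (t : ℕ) :
    Ideal.ofList (rs.map (· ^ t)) ≤ Ideal.ofList rs ^ t := by
  refine Ideal.span_le.mpr fun r hr ↦ ?_
  obtain ⟨s, hs, rfl⟩ := List.mem_map.mp hr
  exact Ideal.pow_mem_pow (Ideal.subset_span (s := {r | r ∈ rs}) hs) t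

lemma exists_pow_le_ofList_map_pow (rs : List R) (t : ℕ) :
    ∃ s, Ideal.ofList rs ^ s ≤ Ideal.ofList (rs.map (· ^ t)) := by
  refine Ideal.exists_pow_le_of_le_radical_of_fg (Ideal.span_le.mpr fun r hr ↦ ?_)
    (Submodule.fg_span rs.finite_toSet)
  exact ⟨t, Ideal.subset_span (List.mem_map_of_mem hr)⟩

lemma isZero_localCohomology_of_length_lt (M : ModuleCat.{u} R) {rs : List R}
    (hrs : IsWeaklyRegular R rs) {i : ℕ} (hi : rs.length < i) :
    IsZero ((localCohomology (Ideal.ofList rs) i).obj M) := by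
  refine isZero_localCohomology_of_isZero_ext _ M i fun t ↦ ⟨Ideal.ofList (rs.map (· ^ t)),
    ofList_map_pow_le rs t, exists_pow_le_ofList_map_pow rs t, ?_⟩
  have := hasProjectiveDimensionLT_quotient_ofList (isWeaklyRegular_map_pow hrs t)
  have h_length : (rs.map (· ^ t)).length + 1 ≤ i := by rwa [List.length_map]
  have := HasProjectiveDimensionLT.subsingleton
    (ModuleCat.of R (R ⧸ Ideal.ofList (rs.map (· ^ t)))) _ i h_length M
  exact isZero_ext_of_subsingleton _ M i

theorem isZero_localCohomology_of_ne_length {rs : List R} (hrs : IsWeaklyRegular R rs) {i : ℕ}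
    (hi : i ≠ rs.length) :
    IsZero ((localCohomology (Ideal.ofList rs) i).obj (ModuleCat.of R R)) := by
  rcases hi.lt_or_gt with hi | hi
  · exact isZero_localCohomology_of_lt_length hrs hi
  · exact isZero_localCohomology_of_length_lt _ hrs hi

end LocalCohomology

section MvPowerSeries

open MvPowerSeries

variable {A : Type*} [CommRing A] {σ : Type*}

lemma mem_ofList_map_X_iff {l : List σ} {g : MvPowerSeries σ A} :
    g ∈ Ideal.ofList (l.map X) ↔ ∀ m : σ →₀ ℕ, (∀ a ∈ l, m a = 0) → coeff m g = 0 := by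
  classical
  induction l generalizing g with
  | nil => simp [MvPowerSeries.ext_iff]
  | cons a l ih =>
    simp only [List.map_cons, Ideal.ofList_cons, Submodule.mem_sup, Ideal.mem_span_singleton,
      X_dvd_iff, ih, List.forall_mem_cons, and_imp]
    constructor
    · rintro ⟨p, hp, q, hq, rfl⟩ m hma hml
      rw [map_add, hp m hma, hq m hml, add_zero]
    · intro hg
      let p : MvPowerSeries σ A := fun m ↦ if m a = 0 then 0 else coeff m g
      have hp (m : σ →₀ ℕ) : coeff m p = if m a = 0 then 0 else coeff m g := rfl
      refine ⟨p, fun m hm ↦ by rw [hp, if_pos hm], g - p, fun m hm ↦ ?_, add_sub_cancel p g⟩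
      rw [map_sub, hp]
      split_ifs with hma
      · rw [hg m hma hm, sub_zero]
      · exact sub_self _

lemma mem_ofList_map_X_of_X_mul_mem {l : List σ} {a : σ} (ha : a ∉ l) {g : MvPowerSeries σ A}
    (hg : X a * g ∈ Ideal.ofList (l.map X)) : g ∈ Ideal.ofList (l.map X) := by
  classical
  rw [mem_ofList_map_X_iff] at hg ⊢
  intro m hm
  have h_coeff : coeff (Finsupp.single a 1 + m) (X a * g) = coeff m g := by
    rw [X_def, coeff_add_monomial_mul, one_mul]
  rw [← h_coeff]
  refine hg _ fun b hb ↦ ?_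
  rw [Finsupp.add_apply, hm b hb, Finsupp.single_eq_of_ne (by grind)]

lemma isWeaklyRegular_map_X {l : List σ} (hl : l.Nodup) :
    IsWeaklyRegular (MvPowerSeries σ A) (l.map (X (R := A))) := by
  refine ⟨fun i hi ↦ ?_⟩
  rw [List.length_map] at hi
  rw [smul_eq_mul, Ideal.mul_top, isSMulRegular_quotient_iff_mem_of_smul_mem, ← List.map_take,
    List.getElem_map]
  have h_notMem : l[i] ∉ l.take i := by
    rw [List.mem_take_iff_getElem]
    grind [List.Nodup.getElem_inj_iff]
  exact fun g hg ↦ mem_ofList_map_X_of_X_mul_mem h_notMem hg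

end MvPowerSeries

theorem stmt11_general {A : Type u} [CommRing A] {σ : Type v} [Finite σ] {i : ℕ}
    (hi : i ≠ Nat.card σ) :
    IsZero ((localCohomology
      (Ideal.span (Set.range (MvPowerSeries.X : σ → MvPowerSeries σ A))) i).obj
        (ModuleCat.of (MvPowerSeries σ A) (MvPowerSeries σ A))) := by
  have := Fintype.ofFinite σ
  have h_span : Ideal.ofList (Finset.univ.toList.map MvPowerSeries.X) =
      Ideal.span (Set.range (MvPowerSeries.X : σ → MvPowerSeries σ A)) := by
    simp [Ideal.ofList, Set.range]
  have h_reg : IsWeaklyRegular (MvPowerSeries σ A) (Finset.univ.toList.map MvPowerSeries.X) :=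
    isWeaklyRegular_map_X (Finset.nodup_toList _)
  rw [← h_span]
  exact isZero_localCohomology_of_ne_length h_reg (by simpa using hi)

/-- **Vanishing of local cohomology of a power series ring.**
For `R = A[[x₁,…,xₙ]]` over a Noetherian commutative ring `A` and `I = (x₁,…,xₙ)`,
the local cohomology `Hⁱ_I(R)` vanishes for every `i ≠ n`. -/
theorem stmt11 (A : Type) [CommRing A] [IsNoetherianRing A] (n : ℕ)
    (I : Ideal (MvPowerSeries (Fin n) A))
    (hI : I = Ideal.span (Set.range (MvPowerSeries.X : Fin n → MvPowerSeries (Fin n) A))) :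
    ∀ i : ℕ, i ≠ n →
      CategoryTheory.Limits.IsZero
        ((localCohomology I i).obj
          (ModuleCat.of (MvPowerSeries (Fin n) A) (MvPowerSeries (Fin n) A))) := by
  intro i hi
  exact hI ▸ stmt11_general (by simpa using hi)
end
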